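/- Let Δ = [a,b] ⊂ ℝ ⊂ ℂ, let f : Δ → ℝ be continuous, let α ∈ (0,1), let (n_k) be a strictly increasing sequence of naturals, and let p_{n_k}, q_{n_k} be polynomials of degree ≤ n_k with q_{n_k}(z) ≠ 0 on Δ, ‖p_{n_k}‖_Δ ≤ 1, ‖q_{n_k}‖_Δ = 1, and sup_{x∈Δ} |f(x) − p_{n_k}(x)/q_{n_k}(x)| ≤ α^{n_k} for all k. Define u(z,w) = limsup_{k→∞} (1/n_k)·log|q_{n_k}(z)·w − p_{n_k}(z)| and let u* be its upper semicontinuous regularization. Then every point x ∈ Δ with limsup_{k→∞} |q_{n_k}(x)|^{1/n_k} ≠ 0 satisfies u(x, f(x)) < u*(x, f(x)); in particular (x, f(x)) lies in the negligible set E = {(z,w) ∈ ℂ² : u(z,w) < u*(z,w)}, which is pluripolar in ℂ². -/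

import Mathlib

open Filter Metric

noncomputable section

/-- A subharmonic function on `ℂ` with values in `[-∞, ∞)`: upper semicontinuous,
never `+∞`, and dominated on every closed disk by every continuous function which is
harmonic inside the disk and dominates it on the boundary circle. -/
def SubharmonicFn (u : ℂ → EReal) : Prop :=
  UpperSemicontinuous u ∧ (∀ z, u z ≠ ⊤) ∧
  ∀ (c : ℂ) (r : ℝ), 0 < r →
    ∀ h : ℂ → ℝ, ContinuousOn h (closedBall c r) →
      (∃ F : ℂ → ℂ, DifferentiableOn ℂ F (ball c r) ∧ ∀ z ∈ ball c r, h z = (F z).re) →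
      (∀ z ∈ sphere c r, u z ≤ ((h z : ℝ) : EReal)) →
      ∀ z ∈ closedBall c r, u z ≤ ((h z : ℝ) : EReal)

/-- A plurisubharmonic function on a complex normed space: upper semicontinuous,
never `+∞`, and subharmonic along every complex line. -/
def PshFn {E : Type*} [NormedAddCommGroup E] [NormedSpace ℂ E] (u : E → EReal) : Prop :=
  UpperSemicontinuous u ∧ (∀ z, u z ≠ ⊤) ∧
  ∀ a v : E, SubharmonicFn (fun w : ℂ => u (a + w • v))

/-- A set is pluripolar if it is contained in the `-∞` set of a plurisubharmonic
function which is not identically `-∞`. -/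
def Pluripolar {E : Type*} [NormedAddCommGroup E] [NormedSpace ℂ E] (S : Set E) : Prop :=
  ∃ u : E → EReal, PshFn u ∧ (∃ z, u z ≠ ⊥) ∧ ∀ p ∈ S, u p = ⊥

/-- Extended-real logarithm: `elog 0 = -∞`, otherwise the usual real logarithm. -/
def elog (x : ℝ) : EReal := if x = 0 then ⊥ else ((Real.log x : ℝ) : EReal)

/-!
At a point `(x, f x)` the approximation hypothesis gives `u (x, f x) ≤ log ρ + log α` with
`ρ = limsup |q(x)| ^ (1 / n) > 0`, whereas for `w ≠ f x` the factor `|w - p(x) / q(x)|` stays away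
from zero and `u (x, w) ≥ log ρ`; letting `w → f x` separates `u` from `u*`.

For pluripolarity, a negligible set is covered by countably many compact sets on which, after
discarding a set of points `(z, w)` with irregular growth of `max |p(z)| |q(z)|`, the functions
`q(z) w - p(z)` are uniformly smaller than nearby. Such sets carry polynomials that are
exponentially small, at any rate, relative to their degree. In one variable, oscillation of
polynomials forces potentials to be large in every layer of logarithmic scales, so that the energy
of Leja points outgrows any bound. In two variables, on a thickening of the compact set in the
`w`-direction of width `η`, the products of the `q w - p` are small inside and large on its
boundary, so that each reduction of `η` makes the maximal Vandermonde determinant of bidegree `d`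
decay by a further exponential factor; a lower bound for normalized polynomials on the compact set
would prevent this. Finally, if normalized `P i` of degree `d i` are smaller than `exp (-D i)` on
the sets, with `∑ d i / D i < ∞`, then `∑ (1 / D i) log |P i|` is a plurisubharmonic function equal
to `-∞` on their union.
-/

/-! ### Linear combinations without cancellation -/

section Combinations

variable {𝕜 E X κ : Type*} [RCLike 𝕜] [SeminormedAddCommGroup E] [NormedSpace 𝕜 E]

variable (𝕜) in
lemma exists_norm_le_mul_norm_add_smul (I : Finset X) (x y : X → E) :
    ∃ c : 𝕜, ‖c‖ ≤ 1 ∧ ∀ i ∈ I, ‖y i‖ ≤ 2 * I.card * ‖x i + c • y i‖ := by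
  rcases I.eq_empty_or_nonempty with rfl | hI
  · exact ⟨0, by simp, by simp⟩
  have hM : (0 : ℝ) < I.card := by exact_mod_cast hI.card_pos
  -- Each `i` spoils at most one of the `I.card + 1` candidates `j / I.card`.
  suffices ∃ j ∈ Finset.range (I.card + 1), ∀ i ∈ I,
      ‖y i‖ ≤ 2 * I.card * ‖x i + ((j : 𝕜) / I.card) • y i‖ by
    obtain ⟨j, hj, hy⟩ := this
    refine ⟨j / I.card, ?_, hy⟩
    rw [norm_div, RCLike.norm_natCast, RCLike.norm_natCast]
    exact div_le_one_of_le₀ (mod_cast Finset.mem_range_succ_iff.1 hj) hM.le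
  by_contra! hcon
  have : Nonempty X := ⟨hI.choose⟩
  choose! g hgI hg using hcon
  obtain ⟨j, hj, j', hj', hne, hgj⟩ := Finset.exists_ne_map_eq_of_card_lt_of_maps_to
    (s := Finset.range (I.card + 1)) (t := I) (f := g) (by simp) hgI
  have hbad := hg j hj
  have hbad' := hg j' hj'
  rw [← hgj] at hbad'
  set v := y (g j)
  set a := x (g j)
  have hone : (1 : ℝ) ≤ ‖(j : 𝕜) - j'‖ := by
    have hcast : (j : 𝕜) - j' = ((j - j' : ℤ) : 𝕜) := by push_cast; ring
    rw [hcast, ← RCLike.ofReal_intCast, RCLike.norm_ofReal]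
    exact_mod_cast Int.one_le_abs (by omega : (j : ℤ) - j' ≠ 0)
  have hdiff : ‖v‖ ≤ I.card * (‖a + ((j : 𝕜) / I.card) • v‖ + ‖a + ((j' : 𝕜) / I.card) • v‖) :=
    calc ‖v‖ ≤ ‖(j : 𝕜) - j'‖ * ‖v‖ := le_mul_of_one_le_left (norm_nonneg _) hone
      _ = I.card * ‖(a + ((j : 𝕜) / I.card) • v) - (a + ((j' : 𝕜) / I.card) • v)‖ := by
        rw [add_sub_add_left_eq_sub, ← sub_smul, ← sub_div, norm_smul, norm_div,
          RCLike.norm_natCast]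
        field_simp
      _ ≤ _ := by gcongr; exact norm_sub_le _ _
  linarith

lemma exists_norm_le_pow_mul_norm_sum_smul (I : Finset X) (A : Finset κ) (f : κ → X → E) :
    ∃ c : κ → 𝕜, (∀ a, ‖c a‖ ≤ 1) ∧ ∀ a ∈ A, ∀ i ∈ I,
      ‖f a i‖ ≤ (4 * I.card : ℝ) ^ A.card * ‖∑ a ∈ A, c a • f a i‖ := by
  classical
  induction A using Finset.induction_on with
  | empty => exact ⟨0, by simp, by simp⟩
  | insert b A hb ih =>
    obtain ⟨c, hc, hcA⟩ := ih
    obtain ⟨e, he, heI⟩ :=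
      exists_norm_le_mul_norm_add_smul 𝕜 I (fun i => ∑ a ∈ A, c a • f a i) (f b)
    refine ⟨Function.update c b e, fun a => ?_, fun a ha i hi => ?_⟩
    · rcases eq_or_ne a b with rfl | hab
      · simpa using he
      · simpa [hab] using hc a
    have hI : (1 : ℝ) ≤ I.card := by exact_mod_cast Finset.card_pos.2 ⟨i, hi⟩
    have hsum : ∑ a ∈ insert b A, Function.update c b e a • f a i
        = (∑ a ∈ A, c a • f a i) + e • f b i := by
      rw [Finset.sum_insert hb, add_comm, Function.update_self]
      congr 1
      refine Finset.sum_congr rfl fun a ha => ?_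
      rw [Function.update_of_ne (ne_of_mem_of_not_mem ha hb)]
    rw [hsum, Finset.card_insert_of_notMem hb, pow_succ, mul_assoc]
    set S := ∑ a ∈ A, c a • f a i
    have hbS : ‖f b i‖ ≤ 2 * I.card * ‖S + e • f b i‖ := heI i hi
    have hpow : (1 : ℝ) ≤ (4 * I.card) ^ A.card := one_le_pow₀ (by linarith)
    rcases Finset.mem_insert.1 ha with rfl | ha
    · calc ‖f a i‖ ≤ 4 * I.card * ‖S + e • f a i‖ := hbS.trans (by gcongr; norm_num)
        _ ≤ _ := le_mul_of_one_le_left (by positivity) hpow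
    · refine (hcA a ha i hi).trans (mul_le_mul_of_nonneg_left ?_ (by positivity))
      calc ‖S‖ = ‖(S + e • f b i) - e • f b i‖ := by rw [add_sub_cancel_right]
        _ ≤ ‖S + e • f b i‖ + ‖e‖ * ‖f b i‖ := (norm_sub_le _ _).trans_eq (by rw [norm_smul])
        _ ≤ ‖S + e • f b i‖ + 1 * (2 * I.card * ‖S + e • f b i‖) := by gcongr
        _ ≤ 4 * I.card * ‖S + e • f b i‖ := by
          nlinarith [norm_nonneg (S + e • f b i)]

lemma exp_mul_eq_pow_div {n d : ℕ} (hn : n ≠ 0) (hd : n ∣ d) (t : ℝ) :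
    Real.exp (t * d) = Real.exp (t * n) ^ (d / n) := by
  obtain ⟨e, rfl⟩ := hd
  rw [Nat.mul_div_cancel_left _ (Nat.pos_of_ne_zero hn), ← Real.exp_nat_mul]
  push_cast
  ring_nf

variable {A : Finset κ} {n : κ → ℕ} {d : ℕ}

lemma norm_sum_mul_pow_le {c g : κ → 𝕜} (hc : ∀ k, ‖c k‖ ≤ 1) (hn : ∀ k ∈ A, n k ≠ 0)
    (hd : ∀ k ∈ A, n k ∣ d) {t : ℝ} (hg : ∀ k ∈ A, ‖g k‖ ≤ Real.exp (t * n k)) :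
    ‖∑ k ∈ A, c k * g k ^ (d / n k)‖ ≤ A.card * Real.exp (t * d) := by
  refine (norm_sum_le _ _).trans ?_
  rw [← nsmul_eq_mul]
  refine Finset.sum_le_card_nsmul _ _ _ fun k hk => ?_
  rw [norm_mul, norm_pow, exp_mul_eq_pow_div (hn k hk) (hd k hk)]
  calc ‖c k‖ * ‖g k‖ ^ (d / n k) ≤ 1 * Real.exp (t * n k) ^ (d / n k) := by
        gcongr
        exacts [hc k, hg k hk]
    _ = _ := one_mul _

variable (A) in
lemma exists_exp_le_mul_norm_sum_mul_pow (I : Finset X) (hn : ∀ k ∈ A, n k ≠ 0)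
    (hd : ∀ k ∈ A, n k ∣ d) (g : κ → X → 𝕜) (s : ℝ) :
    ∃ c : κ → 𝕜, (∀ k, ‖c k‖ ≤ 1) ∧ ∀ x ∈ I, (∃ k ∈ A, Real.exp (s * n k) ≤ ‖g k x‖) →
      Real.exp (s * d) ≤
        (4 * I.card : ℝ) ^ A.card * ‖∑ k ∈ A, c k * g k x ^ (d / n k)‖ := by
  obtain ⟨c, hc, hcA⟩ :=
    exists_norm_le_pow_mul_norm_sum_smul (𝕜 := 𝕜) I A fun k x => g k x ^ (d / n k)
  refine ⟨c, hc, fun x hx ⟨k, hk, hkx⟩ => le_trans ?_ (hcA k hk x hx)⟩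
  rw [norm_pow, exp_mul_eq_pow_div (hn k hk) (hd k hk)]
  exact pow_le_pow_left₀ (Real.exp_nonneg _) hkx _

end Combinations

lemma tendsto_exp_mul_natCast_atTop {a : ℝ} (ha : 0 < a) :
    Tendsto (fun n : ℕ => Real.exp (a * n)) atTop atTop :=
  Real.tendsto_exp_atTop.comp (tendsto_natCast_atTop_atTop.const_mul_atTop ha)

/-! ### Layers of the logarithmic potential -/

section LogLayer

/-- The part of the kernel `-log r` lying between the scales `η' ≤ η`: the difference of its
truncations at `η'` and at `η`. -/
def logLayer (η η' r : ℝ) : ℝ := Real.log (max η r) - Real.log (max η' r)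

lemma logLayer_self (η r : ℝ) : logLayer η η r = 0 := sub_self _

lemma logLayer_add_logLayer (η η' η'' r : ℝ) :
    logLayer η η' r + logLayer η' η'' r = logLayer η η'' r :=
  sub_add_sub_cancel _ _ _

lemma logLayer_nonneg {η η' : ℝ} (h' : 0 < η') (h : η' ≤ η) (r : ℝ) : 0 ≤ logLayer η η' r :=
  sub_nonneg.2 (Real.log_le_log (lt_max_of_lt_left h') (max_le_max_right r h))

lemma antitone_logLayer {η η' : ℝ} (h' : 0 < η') (h : η' ≤ η) : Antitone (logLayer η η') := by
  intro r r' hr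
  have hpos : ∀ x, 0 < max η x := fun x => lt_max_of_lt_left (h'.trans_le h)
  have hpos' : ∀ x, 0 < max η' x := fun x => lt_max_of_lt_left h'
  rw [logLayer, logLayer, ← Real.log_div (hpos r').ne' (hpos' r').ne',
    ← Real.log_div (hpos r).ne' (hpos' r).ne']
  refine Real.log_le_log (div_pos (hpos r') (hpos' r')) ?_
  rw [div_le_div_iff₀ (hpos' r') (hpos' r)]
  rcases le_total r' η with hη | hη
  · rw [max_eq_left hη, max_eq_left (hr.trans hη)]
    exact mul_le_mul_of_nonneg_left (max_le_max_left η' hr) (h'.le.trans h)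
  · rw [max_eq_right hη, max_eq_right (h.trans hη), mul_comm]
    exact mul_le_mul_of_nonneg_right (max_le_max_right r h) ((h'.le.trans h).trans hη)

variable {X κ : Type*} [PseudoMetricSpace X]

/-- Some counting measure, normalized to a probability measure, has a potential in the layer
between `η'` and `η` that is at least `σ` on all of `K`. The factor `2` is what the comparison
with pairs of points of `K` through the triangle inequality costs. -/
def HasLayerPotential (K : Set X) (σ η η' : ℝ) : Prop :=
  ∃ Z : Multiset X, Z ≠ 0 ∧
    ∀ z ∈ K, Z.card * σ ≤ (Z.map fun ζ => logLayer η η' (2 * dist z ζ)).sum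

lemma sum_logLayer_two_mul_dist_le {η η' : ℝ} (h' : 0 < η') (h : η' ≤ η) {x : κ → X}
    {s t : Finset κ} (hts : t ⊆ s) {B : ℝ} (hB : 0 ≤ B)
    (hb : ∀ i ∈ t, ∑ j ∈ s, logLayer η η' (dist (x i) (x j)) ≤ B) (ζ : X) :
    ∑ i ∈ t, logLayer η η' (2 * dist (x i) ζ) ≤ B := by
  rcases t.eq_empty_or_nonempty with rfl | hne
  · simpa using hB
  obtain ⟨i₀, hi₀, hmin⟩ := t.exists_min_image (fun i => dist (x i) ζ) hne
  calc ∑ i ∈ t, logLayer η η' (2 * dist (x i) ζ)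
      ≤ ∑ i ∈ t, logLayer η η' (dist (x i₀) (x i)) := by
        refine Finset.sum_le_sum fun i hi => antitone_logLayer h' h ?_
        linarith [dist_triangle_right (x i₀) (x i) ζ, hmin i hi]
    _ ≤ ∑ i ∈ s, logLayer η η' (dist (x i₀) (x i)) :=
        Finset.sum_le_sum_of_subset_of_nonneg hts fun _ _ _ => logLayer_nonneg h' h _
    _ ≤ B := hb i₀ hi₀

-- Markov's inequality: either half of the points see a large potential of the other points, or
-- half of them see a small one, and then their potentials cannot be large against `Z` either.
lemma HasLayerPotential.energy_ge {K : Set X} {σ η η' : ℝ} (hK : HasLayerPotential K σ η η')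
    (hσ : 0 < σ) (h' : 0 < η') (h : η' ≤ η) {x : κ → X} {s : Finset κ} (hx : ∀ i ∈ s, x i ∈ K) :
    σ * s.card ^ 2 / 4 ≤ ∑ i ∈ s, ∑ j ∈ s, logLayer η η' (dist (x i) (x j)) := by
  classical
  obtain ⟨Z, hZ, hpot⟩ := hK
  set V : κ → ℝ := fun i => ∑ j ∈ s, logLayer η η' (dist (x i) (x j))
  have hV : ∀ i, 0 ≤ V i := fun i => Finset.sum_nonneg fun _ _ => logLayer_nonneg h' h _
  set B := σ * s.card / 2
  set low := s.filter fun i => V i ≤ B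
  set high := s.filter fun i => ¬ V i ≤ B
  have hcard : (low.card : ℝ) + high.card = s.card := by
    exact_mod_cast Finset.card_filter_add_card_filter_not (s := s) fun i => V i ≤ B
  have hhigh : high.card * B ≤ ∑ i ∈ s, V i := calc
    high.card * B ≤ ∑ i ∈ high, V i := by
      rw [← nsmul_eq_mul]
      exact Finset.card_nsmul_le_sum _ _ _ fun i hi => (not_le.1 (Finset.mem_filter.1 hi).2).le
    _ ≤ ∑ i ∈ s, V i :=
      Finset.sum_le_sum_of_subset_of_nonneg (Finset.filter_subset _ _) fun i _ _ => hV i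
  have hlow : low.card * (Z.card * σ) ≤ Z.card * B := calc
    low.card * (Z.card * σ) ≤ ∑ i ∈ low, (Z.map fun ζ => logLayer η η' (2 * dist (x i) ζ)).sum := by
      rw [← nsmul_eq_mul]
      exact Finset.card_nsmul_le_sum _ _ _ fun i hi => hpot _ (hx i (Finset.mem_filter.1 hi).1)
    _ = (Z.map fun ζ => ∑ i ∈ low, logLayer η η' (2 * dist (x i) ζ)).sum :=
      Multiset.sum_map_sum_map low.val Z
    _ ≤ (Z.map fun _ => B).sum := by
      refine Multiset.sum_map_le_sum_map _ _ fun ζ _ => ?_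
      exact sum_logLayer_two_mul_dist_le h' h (Finset.filter_subset _ _) (by positivity)
        (fun i hi => (Finset.mem_filter.1 hi).2) ζ
    _ = Z.card * B := by simp
  have hZpos : (0 : ℝ) < Z.card := by exact_mod_cast Multiset.card_pos.2 hZ
  have hlow_le : (low.card : ℝ) ≤ s.card / 2 := by
    refine le_of_mul_le_mul_left ?_ (mul_pos hZpos hσ)
    calc Z.card * σ * low.card = low.card * (Z.card * σ) := by ring
      _ ≤ Z.card * B := hlow
      _ = Z.card * σ * (s.card / 2) := by simp only [B]; ring
  calc σ * s.card ^ 2 / 4 = s.card / 2 * B := by ring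
    _ ≤ high.card * B := by gcongr; linarith
    _ ≤ ∑ i ∈ s, V i := hhigh

lemma exists_energy_ge {K : Set X} {σ : ℝ} (hσ : 0 < σ)
    (hK : ∀ η > 0, ∃ η' > 0, η' ≤ η ∧ HasLayerPotential K σ η η') (J : ℕ) :
    ∃ η > 0, η ≤ 1 ∧ ∀ (m : ℕ) (x : ℕ → X), (∀ i, x i ∈ K) →
      J * (σ * m ^ 2 / 4) ≤
        ∑ i ∈ Finset.range m, ∑ j ∈ Finset.range m, logLayer 1 η (dist (x i) (x j)) := by
  induction J with
  | zero => exact ⟨1, one_pos, le_rfl, fun m x _ => by simp [logLayer_self]⟩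
  | succ J ih =>
    obtain ⟨η, hη, hη1, hlow⟩ := ih
    obtain ⟨η', hη', hle, hpot⟩ := hK η hη
    refine ⟨η', hη', hle.trans hη1, fun m x hx => ?_⟩
    have hlayer := hpot.energy_ge hσ hη' hle (s := Finset.range m) fun i _ => hx i
    rw [Finset.card_range] at hlayer
    simp_rw [← logLayer_add_logLayer 1 η η', Finset.sum_add_distrib]
    push_cast
    linarith [hlow m x hx]

end LogLayer

/-! ### Sets of zero Chebyshev constant -/

/-- The Chebyshev constants `inf_T ‖T‖_K ^ (1 / deg T)`, over monic `T`, of `K` vanish; for compact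
`K` this says that `K` has logarithmic capacity zero. -/
def HasZeroChebyshev (K : Set ℂ) : Prop :=
  ∀ C : ℝ, ∃ T : Polynomial ℂ, T.Monic ∧ 1 ≤ T.natDegree ∧
    ∀ z ∈ K, ‖T.eval z‖ ≤ Real.exp (-C * T.natDegree)

section Leja

lemma exists_exp_le_norm_eval_of_not_hasZeroChebyshev {K : Set ℂ} (hK : ¬ HasZeroChebyshev K) :
    ∃ C : ℝ, 0 ≤ C ∧ ∀ T : Polynomial ℂ, T.Monic → 1 ≤ T.natDegree →
      ∃ z ∈ K, Real.exp (-C * T.natDegree) ≤ ‖T.eval z‖ := by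
  unfold HasZeroChebyshev at hK
  push Not at hK
  obtain ⟨C, hC⟩ := hK
  refine ⟨|C|, abs_nonneg C, fun T hT hd => ?_⟩
  obtain ⟨z, hz, hlt⟩ := hC T hT hd
  refine ⟨z, hz, le_trans (Real.exp_le_exp.2 ?_) hlt.le⟩
  exact mul_le_mul_of_nonneg_right (neg_le_neg (le_abs_self C)) (Nat.cast_nonneg _)

-- `x j` is chosen to make the monic polynomial with roots `x 0, …, x (j - 1)` large.
lemma exists_leja_seq {K : Set ℂ} (hne : K.Nonempty) {C : ℝ}
    (hC : ∀ T : Polynomial ℂ, T.Monic → 1 ≤ T.natDegree →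
      ∃ z ∈ K, Real.exp (-C * T.natDegree) ≤ ‖T.eval z‖) :
    ∃ x : ℕ → ℂ, (∀ i, x i ∈ K) ∧
      ∀ j : ℕ, Real.exp (-C * j) ≤ ∏ i ∈ Finset.range j, dist (x j) (x i) := by
  have next : ∀ (j : ℕ) (y : ∀ i < j, ℂ), ∃ z ∈ K, Real.exp (-C * j) ≤
      ∏ i : Fin j, dist z (y i i.2) := by
    intro j y
    rcases Nat.eq_zero_or_pos j with rfl | hj
    · exact ⟨hne.some, hne.some_mem, by simp⟩
    set T : Polynomial ℂ := ∏ i : Fin j, (Polynomial.X - Polynomial.C (y i i.2)) with hT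
    have hmonic : T.Monic := Polynomial.monic_prod_X_sub_C _ _
    have hdeg : T.natDegree = j := by
      rw [hT, Polynomial.natDegree_finsetProd_X_sub_C_eq_card, Finset.card_univ, Fintype.card_fin]
    obtain ⟨z, hz, hle⟩ := hC T hmonic (by omega)
    refine ⟨z, hz, ?_⟩
    rw [hdeg, hT, Polynomial.eval_prod, norm_prod] at hle
    simpa [dist_eq_norm] using hle
  choose g hgK hg using next
  let x : ℕ → ℂ := Nat.strongRec (motive := fun _ => ℂ) g
  have hx : ∀ j, x j = g j fun i _ => x i := fun j => Nat.strongRec_eq g j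
  refine ⟨x, fun i => hx i ▸ hgK _ _, fun j => ?_⟩
  rw [Finset.prod_range fun i => dist (x j) (x i)]
  simpa only [← hx j] using hg j fun i _ => x i

lemma sum_range_sum_range_of_symm {G : ℕ → ℕ → ℝ} (hG : ∀ i j, G i j = G j i) (m : ℕ) :
    ∑ i ∈ Finset.range m, ∑ j ∈ Finset.range m, G i j =
      ∑ i ∈ Finset.range m, (2 * ∑ j ∈ Finset.range i, G i j + G i i) := by
  induction m with
  | zero => simp
  | succ m ih =>
    rw [Finset.sum_range_succ (fun i => 2 * ∑ j ∈ Finset.range i, G i j + G i i), ← ih]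
    simp_rw [Finset.sum_range_succ _ m, Finset.sum_add_distrib, fun i => hG i m]
    ring

lemma leja_energy_le {X : Type*} [PseudoMetricSpace X] {x : ℕ → X} {C R η : ℝ} (hC : 0 ≤ C)
    (hR : 1 ≤ R) (hdist : ∀ i j, dist (x i) (x j) ≤ R)
    (hx : ∀ j : ℕ, Real.exp (-C * j) ≤ ∏ i ∈ Finset.range j, dist (x j) (x i)) (hη : 0 < η)
    (m : ℕ) :
    ∑ i ∈ Finset.range m, ∑ j ∈ Finset.range m, logLayer 1 η (dist (x i) (x j)) ≤
      2 * (C + Real.log R) * m ^ 2 + m * -Real.log η := by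
  have hlogR : 0 ≤ Real.log R := Real.log_nonneg hR
  have hdiag : ∀ i, logLayer 1 η (dist (x i) (x i)) = -Real.log η := fun i => by
    rw [logLayer, dist_self, max_eq_left zero_le_one, max_eq_left hη.le, Real.log_one, zero_sub]
  have hrow : ∀ i : ℕ, ∑ j ∈ Finset.range i, logLayer 1 η (dist (x i) (x j)) ≤
      (C + Real.log R) * i := by
    intro i
    have hprod : 0 < ∏ j ∈ Finset.range i, dist (x i) (x j) := (Real.exp_pos _).trans_le (hx i)
    have hne : ∀ j ∈ Finset.range i, dist (x i) (x j) ≠ 0 := Finset.prod_ne_zero_iff.1 hprod.ne'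
    have hlog : -C * i ≤ ∑ j ∈ Finset.range i, Real.log (dist (x i) (x j)) := by
      rw [← Real.log_prod hne, Real.le_log_iff_exp_le hprod]
      exact hx i
    calc ∑ j ∈ Finset.range i, logLayer 1 η (dist (x i) (x j))
        ≤ ∑ j ∈ Finset.range i, (Real.log R - Real.log (dist (x i) (x j))) := by
          refine Finset.sum_le_sum fun j hj => sub_le_sub ?_ ?_
          · exact Real.log_le_log (by positivity) (max_le hR (hdist i j))
          · exact Real.log_le_log (dist_nonneg.lt_of_ne' (hne j hj)) (le_max_right _ _)
      _ = i * Real.log R - ∑ j ∈ Finset.range i, Real.log (dist (x i) (x j)) := by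
          rw [Finset.sum_sub_distrib, Finset.sum_const, Finset.card_range, nsmul_eq_mul]
      _ ≤ (C + Real.log R) * i := by linarith
  rw [sum_range_sum_range_of_symm fun i j => by rw [dist_comm]]
  calc ∑ i ∈ Finset.range m, (2 * ∑ j ∈ Finset.range i, logLayer 1 η (dist (x i) (x j)) +
        logLayer 1 η (dist (x i) (x i)))
      ≤ ∑ _i ∈ Finset.range m, (2 * ((C + Real.log R) * m) + -Real.log η) := by
        refine Finset.sum_le_sum fun i hi => ?_
        rw [hdiag]
        have him : (i : ℝ) ≤ m := by exact_mod_cast (Finset.mem_range.1 hi).le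
        gcongr
        exact (hrow i).trans (by gcongr)
    _ = _ := by rw [Finset.sum_const, Finset.card_range, nsmul_eq_mul]; ring

-- Each of the `J` scales contributes `σ m² / 4` to the energy of `m` Leja points, which would be
-- `O(m²)` with a constant independent of `J` if `K` had positive Chebyshev constant.
theorem hasZeroChebyshev_of_hasLayerPotential {K : Set ℂ} (hbdd : Bornology.IsBounded K) {σ : ℝ}
    (hσ : 0 < σ) (hK : ∀ η > 0, ∃ η' > 0, η' ≤ η ∧ HasLayerPotential K σ η η') :
    HasZeroChebyshev K := by
  rcases K.eq_empty_or_nonempty with rfl | hne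
  · exact fun C => ⟨Polynomial.X, Polynomial.monic_X, by simp, by simp⟩
  by_contra hzero
  obtain ⟨C, hC0, hC⟩ := exists_exp_le_norm_eval_of_not_hasZeroChebyshev hzero
  obtain ⟨x, hxK, hx⟩ := exists_leja_seq hne hC
  obtain ⟨R, hR1, hR⟩ : ∃ R : ℝ, 1 ≤ R ∧ ∀ i j, dist (x i) (x j) ≤ R := by
    obtain ⟨R, hR⟩ := Metric.isBounded_iff.1 hbdd
    exact ⟨max 1 R, le_max_left _ _, fun i j => (hR (hxK i) (hxK j)).trans (le_max_right _ _)⟩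
  set C₁ := 2 * (C + Real.log R)
  obtain ⟨J, hJ⟩ := exists_nat_gt ((C₁ + 1) / (σ / 4))
  obtain ⟨η, hη, -, hlow⟩ := exists_energy_ge hσ hK J
  obtain ⟨m, hm⟩ := exists_nat_gt (max 0 (-Real.log η))
  have hm0 : (0 : ℝ) < m := (le_max_left _ _).trans_lt hm
  rw [div_lt_iff₀ (by positivity)] at hJ
  have hcompare : J * (σ / 4) * (m : ℝ) ^ 2 ≤ (C₁ + 1) * (m : ℝ) ^ 2 := calc
    J * (σ / 4) * (m : ℝ) ^ 2 = J * (σ * m ^ 2 / 4) := by ring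
    _ ≤ C₁ * m ^ 2 + m * -Real.log η := (hlow m x hxK).trans (leja_energy_le hC0 hR1 hR hx hη m)
    _ ≤ C₁ * m ^ 2 + m * m := by gcongr; exact (le_max_right _ _).trans hm.le
    _ = (C₁ + 1) * (m : ℝ) ^ 2 := by ring
  exact (le_of_mul_le_mul_right hcompare (by positivity)).not_gt hJ

end Leja

/-! ### Oscillation of polynomials near sets of positive capacity -/

section Oscillation

lemma exists_finset_near_of_isCompact {X ι : Type*} [PseudoMetricSpace X] {K : Set X}
    (hK : IsCompact K) {p : X → ι → Prop} {η : ℝ}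
    (h : ∀ z ∈ K, ∃ z', dist z' z < η ∧ ∃ i, p z' i) :
    ∃ (I : Finset X) (A : Finset ι), ∀ z ∈ K, ∃ z' ∈ I, dist z' z < η ∧ ∃ i ∈ A, p z' i := by
  classical
  choose g hg k hk using fun z : K => h z z.2
  obtain ⟨S, hS⟩ := hK.elim_finite_subcover (fun z : K => ball (g z) η) (fun _ => isOpen_ball)
    fun z hz => Set.mem_iUnion.2 ⟨⟨z, hz⟩, mem_ball'.2 (hg _)⟩
  refine ⟨S.image g, S.image k, fun z hz => ?_⟩
  obtain ⟨y, hyS, hzy⟩ := Set.mem_iUnion₂.1 (hS hz)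
  exact ⟨g y, Finset.mem_image_of_mem _ hyS, mem_ball'.1 hzy, k y,
    Finset.mem_image_of_mem _ hyS, hk y⟩

lemma exists_common_multiple_le_exp {ι : Type*} {A : Finset ι} {n : ι → ℕ}
    (hn : ∀ i ∈ A, n i ≠ 0) {τ : ℝ} (hτ : 0 < τ) (B : ℝ) :
    ∃ m : ℕ, m ≠ 0 ∧ (∀ i ∈ A, n i ∣ m) ∧ B ≤ Real.exp (τ * m) := by
  obtain ⟨N, hB, hN⟩ := ((tendsto_exp_mul_natCast_atTop hτ).eventually_ge_atTop B |>.and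
    (eventually_ne_atTop 0)).exists
  have hprod : ∏ i ∈ A, n i ≠ 0 := Finset.prod_ne_zero_iff.2 hn
  refine ⟨(∏ i ∈ A, n i) * N, mul_ne_zero hprod hN,
    fun i hi => (Finset.dvd_prod_of_mem n hi).mul_right N, hB.trans (Real.exp_le_exp.2 ?_)⟩
  gcongr
  exact Nat.le_mul_of_pos_left N (Nat.pos_of_ne_zero hprod)

lemma exists_polynomial_exp_mul_norm_eval_le {K : Set ℂ} (hK : IsCompact K) {ι : Type*}
    {r : ι → Polynomial ℂ} {n : ι → ℕ} (hn : ∀ i, n i ≠ 0) (hdeg : ∀ i, (r i).natDegree ≤ n i)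
    {t s : ℝ} (hts : t < s) (ht : ∀ i, ∀ z ∈ K, ‖(r i).eval z‖ ≤ Real.exp (t * n i)) {η : ℝ}
    (hs : ∀ z ∈ K, ∃ z', dist z' z < η ∧ ∃ i, Real.exp (s * n i) ≤ ‖(r i).eval z'‖) :
    ∃ (F : Polynomial ℂ) (m : ℕ), m ≠ 0 ∧ F.natDegree ≤ m ∧ ∀ z ∈ K, ∃ z', dist z' z < η ∧
      F.eval z' ≠ 0 ∧ Real.exp ((s - t) / 2 * m) * ‖F.eval z‖ ≤ ‖F.eval z'‖ := by
  obtain ⟨I, A, hIA⟩ := exists_finset_near_of_isCompact hK hs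
  set κ : ℝ := (4 * I.card : ℝ) ^ A.card
  obtain ⟨m, hm0, hdvd, hm⟩ := exists_common_multiple_le_exp (A := A) (fun i _ => hn i)
    (half_pos (sub_pos.2 hts)) (A.card * κ)
  obtain ⟨c, hc, hbig⟩ := exists_exp_le_mul_norm_sum_mul_pow A I (fun i _ => hn i) hdvd
    (fun i z => (r i).eval z) s
  set F : Polynomial ℂ := ∑ i ∈ A, Polynomial.C (c i) * r i ^ (m / n i) with hF
  have heval : ∀ z, F.eval z = ∑ i ∈ A, c i * (r i).eval z ^ (m / n i) := fun z => by
    simp [hF, Polynomial.eval_finsetSum]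
  refine ⟨F, m, hm0, Polynomial.natDegree_sum_le_of_forall_le _ _ fun i hi => ?_, fun z hz => ?_⟩
  · calc (Polynomial.C (c i) * r i ^ (m / n i)).natDegree
        ≤ m / n i * (r i).natDegree :=
          (Polynomial.natDegree_C_mul_le _ _).trans Polynomial.natDegree_pow_le
      _ ≤ m / n i * n i := Nat.mul_le_mul_left _ (hdeg i)
      _ = m := Nat.div_mul_cancel (hdvd i hi)
  obtain ⟨z', hz'I, hdist, hz'⟩ := hIA z hz
  have hlarge : Real.exp (s * m) ≤ κ * ‖F.eval z'‖ := heval z' ▸ hbig z' hz'I hz'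
  have hsmall : ‖F.eval z‖ ≤ A.card * Real.exp (t * m) :=
    heval z ▸ norm_sum_mul_pow_le hc (fun i _ => hn i) hdvd fun i _ => ht i z hz
  have hκ : 0 < κ := by
    have : 0 < I.card := Finset.card_pos.2 ⟨z', hz'I⟩
    positivity
  refine ⟨z', hdist, fun h0 => ?_, le_of_mul_le_mul_left ?_ hκ⟩
  · rw [h0, norm_zero, mul_zero] at hlarge
    exact (Real.exp_pos _).not_ge hlarge
  calc κ * (Real.exp ((s - t) / 2 * m) * ‖F.eval z‖)
      ≤ κ * (Real.exp ((s - t) / 2 * m) * (A.card * Real.exp (t * m))) := by gcongr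
    _ = A.card * κ * (Real.exp ((s - t) / 2 * m) * Real.exp (t * m)) := by ring
    _ ≤ Real.exp ((s - t) / 2 * m) * (Real.exp ((s - t) / 2 * m) * Real.exp (t * m)) := by gcongr
    _ = Real.exp (s * m) := by rw [← Real.exp_add, ← Real.exp_add]; ring_nf
    _ ≤ κ * ‖F.eval z'‖ := hlarge

lemma norm_eval_eq_norm_leadingCoeff_mul_prod_dist (F : Polynomial ℂ) (z : ℂ) :
    ‖F.eval z‖ = ‖F.leadingCoeff‖ * (F.roots.map fun ζ => dist z ζ).prod := by
  rw [(IsAlgClosed.splits F).eval_eq_prod_roots, norm_mul]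
  congr 1
  exact (map_multiset_prod (normHom : ℂ →*₀ ℝ) _).trans (by simp [dist_eq_norm])

section PotentialOfRoots

variable {X : Type*} [PseudoMetricSpace X] {Z : Multiset X} {z z' : X} {η η' τ : ℝ}

lemma le_sum_logLayer_of_mem (hη : 0 < η) {a : ℝ} (ha : 0 ≤ a) {ζ : X} (hζ : ζ ∈ Z)
    (hz : 2 * dist z ζ ≤ η * Real.exp (-a)) :
    a ≤ (Z.map fun ζ => logLayer η (η * Real.exp (-a)) (2 * dist z ζ)).sum := by
  have hle : η * Real.exp (-a) ≤ η :=
    mul_le_of_le_one_right hη.le (Real.exp_le_one_iff.2 (neg_nonpos.2 ha))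
  calc a = logLayer η (η * Real.exp (-a)) (2 * dist z ζ) := by
        rw [logLayer, max_eq_left (hz.trans hle), max_eq_left hz,
          Real.log_mul hη.ne' (Real.exp_ne_zero _), Real.log_exp]
        ring
    _ ≤ _ := by
        refine Multiset.single_le_sum (fun y hy => ?_) _ (Multiset.mem_map_of_mem _ hζ)
        obtain ⟨ξ, -, rfl⟩ := Multiset.mem_map.1 hy
        exact logLayer_nonneg (mul_pos hη (Real.exp_pos _)) hle _

lemma dist_le_dist_mul_exp_logLayer (hη : 0 < η) (hη' : 0 < η') (hτ : 0 ≤ τ) {ζ : X}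
    (hz : η' ≤ 2 * dist z ζ) (hzz' : dist z' z ≤ η * τ / 4) :
    dist z' ζ ≤ dist z ζ * Real.exp (τ / 2 + logLayer η η' (2 * dist z ζ)) := by
  have hpos : 0 < 2 * dist z ζ := hη'.trans_le hz
  set M := max η (2 * dist z ζ)
  have hηM : η ≤ M := le_max_left _ _
  have hzM : 2 * dist z ζ ≤ M := le_max_right _ _
  calc dist z' ζ ≤ η * τ / 4 + dist z ζ := (dist_triangle _ z _).trans (by gcongr)
    _ ≤ M * τ / 4 + M / 2 := by gcongr; linarith
    _ = (τ / 2 + 1) * M / 2 := by ring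
    _ ≤ Real.exp (τ / 2) * M / 2 := by
      have : 0 < M := hη.trans_le hηM
      gcongr
      exact Real.add_one_le_exp _
    _ = dist z ζ * Real.exp (τ / 2 + logLayer η η' (2 * dist z ζ)) := by
      rw [logLayer, max_eq_right hz, Real.exp_add, Real.exp_sub, Real.exp_log (hη.trans_le hηM),
        Real.exp_log hpos]
      have : dist z ζ ≠ 0 := by linarith
      field_simp

lemma prod_dist_le_prod_dist_mul_exp (hη : 0 < η) (hη' : 0 < η') (hτ : 0 ≤ τ)
    (hz : ∀ ζ ∈ Z, η' ≤ 2 * dist z ζ) (hzz' : dist z' z ≤ η * τ / 4) :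
    (Z.map fun ζ => dist z' ζ).prod ≤ (Z.map fun ζ => dist z ζ).prod *
      Real.exp (Z.card * (τ / 2) + (Z.map fun ζ => logLayer η η' (2 * dist z ζ)).sum) := by
  have hsum : Z.card * (τ / 2) + (Z.map fun ζ => logLayer η η' (2 * dist z ζ)).sum =
      (Z.map fun ζ => τ / 2 + logLayer η η' (2 * dist z ζ)).sum := by
    simp [Multiset.sum_map_add]
  rw [hsum, Real.exp_multiset_sum, Multiset.map_map, ← Multiset.prod_map_mul]
  exact Multiset.prod_map_le_prod_map₀ _ _ (fun _ _ => dist_nonneg) fun ζ hζ =>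
    dist_le_dist_mul_exp_logLayer hη hη' hτ (hz ζ hζ) hzz'

lemma card_mul_le_sum_logLayer (hη : 0 < η) (hη' : 0 < η') (hτ : 0 ≤ τ)
    (hz : ∀ ζ ∈ Z, η' ≤ 2 * dist z ζ) (hzz' : dist z' z ≤ η * τ / 4)
    (hgain : Real.exp (τ * Z.card) * (Z.map fun ζ => dist z ζ).prod ≤
      (Z.map fun ζ => dist z' ζ).prod) :
    Z.card * (τ / 2) ≤ (Z.map fun ζ => logLayer η η' (2 * dist z ζ)).sum := by
  have hpos : 0 < (Z.map fun ζ => dist z ζ).prod := by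
    refine Multiset.prod_pos fun y hy => ?_
    obtain ⟨ζ, hζ, rfl⟩ := Multiset.mem_map.1 hy
    linarith [hz ζ hζ]
  have hexp := hgain.trans (prod_dist_le_prod_dist_mul_exp hη hη' hτ hz hzz')
  rw [mul_comm] at hexp
  linarith [Real.exp_le_exp.1 (le_of_mul_le_mul_left hexp hpos)]

end PotentialOfRoots

lemma exists_hasLayerPotential_of_polynomial {K : Set ℂ} {F : Polynomial ℂ} {m : ℕ}
    (hFm : F.natDegree ≤ m) (hm : m ≠ 0) {τ η : ℝ} (hτ : 0 < τ) (hη : 0 < η)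
    (hF : ∀ z ∈ K, ∃ z', dist z' z < η * τ / 4 ∧
      F.eval z' ≠ 0 ∧ Real.exp (τ * m) * ‖F.eval z‖ ≤ ‖F.eval z'‖) :
    ∃ η' > 0, η' ≤ η ∧ HasLayerPotential K (τ / 2) η η' := by
  rcases K.eq_empty_or_nonempty with rfl | ⟨z₀, hz₀⟩
  · exact ⟨η, hη, le_rfl, {0}, by simp, by simp⟩
  have hcard : (F.roots.card : ℝ) ≤ m := by exact_mod_cast F.card_roots'.trans hFm
  have hroots : F.roots ≠ 0 := by
    intro h0
    obtain ⟨z', -, hz', hle⟩ := hF z₀ hz₀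
    rw [← norm_ne_zero_iff] at hz'
    simp only [norm_eval_eq_norm_leadingCoeff_mul_prod_dist F, h0, Multiset.map_zero,
      Multiset.prod_zero, mul_one] at hz' hle
    have hone : 1 < Real.exp (τ * m) := Real.one_lt_exp_iff.2 (by positivity)
    exact hle.not_gt (lt_mul_of_one_lt_left ((norm_nonneg _).lt_of_ne' hz') hone)
  set a := F.roots.card * (τ / 2)
  have ha : 0 ≤ a := by positivity
  refine ⟨η * Real.exp (-a), by positivity,
    mul_le_of_le_one_right hη.le (Real.exp_le_one_iff.2 (neg_nonpos.2 ha)), F.roots, hroots,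
    fun z hz => ?_⟩
  by_cases hnear : ∃ ζ ∈ F.roots, 2 * dist z ζ ≤ η * Real.exp (-a)
  · obtain ⟨ζ, hζ, hzζ⟩ := hnear
    exact le_sum_logLayer_of_mem hη ha hζ hzζ
  push Not at hnear
  obtain ⟨z', hdist, hz', hgain⟩ := hF z hz
  refine card_mul_le_sum_logLayer hη (by positivity) hτ.le (fun ζ hζ => (hnear ζ hζ).le) hdist.le ?_
  have hlc : 0 < ‖F.leadingCoeff‖ :=
    norm_pos_iff.2 (Polynomial.leadingCoeff_ne_zero.2 fun h0 => hz' (by simp [h0]))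
  rw [norm_eval_eq_norm_leadingCoeff_mul_prod_dist, norm_eval_eq_norm_leadingCoeff_mul_prod_dist,
    mul_left_comm] at hgain
  calc Real.exp (τ * F.roots.card) * (F.roots.map fun ζ => dist z ζ).prod
      ≤ Real.exp (τ * m) * (F.roots.map fun ζ => dist z ζ).prod := by
        gcongr
        exact Multiset.prod_nonneg (Multiset.forall_mem_map_iff.2 fun _ _ => dist_nonneg)
    _ ≤ (F.roots.map fun ζ => dist z' ζ).prod := le_of_mul_le_mul_left hgain hlc

theorem hasZeroChebyshev_of_oscillation {K : Set ℂ} (hK : IsCompact K) {ι : Type*}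
    {r : ι → Polynomial ℂ} {n : ι → ℕ} (hn : ∀ i, n i ≠ 0) (hdeg : ∀ i, (r i).natDegree ≤ n i)
    {t s : ℝ} (hts : t < s) (ht : ∀ i, ∀ z ∈ K, ‖(r i).eval z‖ ≤ Real.exp (t * n i))
    (hs : ∀ z ∈ K, ∀ η > 0, ∃ z', dist z' z < η ∧ ∃ i, Real.exp (s * n i) ≤ ‖(r i).eval z'‖) :
    HasZeroChebyshev K := by
  have hτ : 0 < (s - t) / 2 := half_pos (sub_pos.2 hts)
  refine hasZeroChebyshev_of_hasLayerPotential hK.isBounded (half_pos hτ) fun η hη => ?_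
  obtain ⟨F, m, hm, hFm, hF⟩ := exists_polynomial_exp_mul_norm_eval_le hK hn hdeg hts ht
    fun z hz => hs z hz (η * ((s - t) / 2) / 4) (by positivity)
  exact exists_hasLayerPotential_of_polynomial hFm hm hτ hη hF

end Oscillation

/-! ### Normalized bivariate polynomials and their potentials -/

section BiPoly

lemma norm_eval_le_mul_two_mul_max_pow {g : Polynomial ℂ} {d : ℕ} (hd : g.natDegree ≤ d) {B : ℝ}
    (hB : ∀ i, ‖g.coeff i‖ ≤ B) (z : ℂ) : ‖g.eval z‖ ≤ B * (2 * max 1 ‖z‖) ^ d := by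
  have hB0 : 0 ≤ B := (norm_nonneg _).trans (hB 0)
  rw [Polynomial.eval_eq_sum_range' (Nat.lt_succ_of_le hd)]
  calc ‖∑ i ∈ Finset.range (d + 1), g.coeff i * z ^ i‖
      ≤ ∑ _i ∈ Finset.range (d + 1), B * max 1 ‖z‖ ^ d := by
        refine norm_sum_le_of_le _ fun i hi => ?_
        rw [norm_mul, norm_pow]
        gcongr
        · exact hB i
        · exact (pow_le_pow_left₀ (norm_nonneg _) (le_max_right _ _) i).trans
            (pow_le_pow_right₀ (le_max_left _ _) (Nat.lt_succ_iff.1 (Finset.mem_range.1 hi)))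
    _ = ((d + 1 : ℕ) : ℝ) * (B * max 1 ‖z‖ ^ d) := by simp
    _ ≤ 2 ^ d * (B * max 1 ‖z‖ ^ d) := by
        gcongr
        exact_mod_cast Nat.lt_two_pow_self
    _ = B * (2 * max 1 ‖z‖) ^ d := by rw [mul_pow]; ring

/-- A polynomial in two variables of degree at most `d` in each of them whose largest coefficient
has modulus one; the inner variable is the first one. -/
structure IsNormalizedBiPoly (d : ℕ) (P : Polynomial (Polynomial ℂ)) : Prop where
  natDegree_le : P.natDegree ≤ d
  natDegree_coeff_le : ∀ j, (P.coeff j).natDegree ≤ d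
  norm_coeff_le_one : ∀ j i, ‖(P.coeff j).coeff i‖ ≤ 1
  exists_norm_coeff_eq_one : ∃ j i, ‖(P.coeff j).coeff i‖ = 1

/-- The base of the growth bound `|P p| ≤ (biPolyBound p) ^ d` of normalized polynomials of
degree `d`. -/
def biPolyBound (p : ℂ × ℂ) : ℝ := (2 * max 1 ‖p.1‖) * (2 * max 1 ‖p.2‖)

lemma one_le_biPolyBound (p : ℂ × ℂ) : 1 ≤ biPolyBound p :=
  one_le_mul_of_one_le_of_one_le (by linarith [le_max_left 1 ‖p.1‖])
    (by linarith [le_max_left 1 ‖p.2‖])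

lemma biPolyBound_pos (p : ℂ × ℂ) : 0 < biPolyBound p :=
  one_pos.trans_le (one_le_biPolyBound p)

@[fun_prop]
lemma continuous_biPolyBound : Continuous biPolyBound := by
  unfold biPolyBound
  fun_prop

lemma evalEval_eq_eval_map (P : Polynomial (Polynomial ℂ)) (z w : ℂ) :
    P.evalEval z w = (P.map (Polynomial.evalRingHom z)).eval w :=
  (Polynomial.map_evalRingHom_eval z w P).symm

lemma differentiable_evalEval (P : Polynomial (Polynomial ℂ)) :
    Differentiable ℂ fun p : ℂ × ℂ => P.evalEval p.1 p.2 := by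
  simp only [evalEval_eq_eval_map, Polynomial.eval_map, Polynomial.eval₂_eq_sum_range,
    Polynomial.coe_evalRingHom]
  have (g : Polynomial ℂ) : Differentiable ℂ fun p : ℂ × ℂ => g.eval p.1 :=
    g.differentiable.comp differentiable_fst
  fun_prop

variable {d : ℕ} {P : Polynomial (Polynomial ℂ)}

lemma IsNormalizedBiPoly.norm_coeff_map_le (hP : IsNormalizedBiPoly d P) (z : ℂ) (j : ℕ) :
    ‖(P.map (Polynomial.evalRingHom z)).coeff j‖ ≤ (2 * max 1 ‖z‖) ^ d := by
  rw [Polynomial.coeff_map, Polynomial.coe_evalRingHom]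
  simpa using norm_eval_le_mul_two_mul_max_pow (hP.natDegree_coeff_le j) (hP.norm_coeff_le_one j) z

lemma IsNormalizedBiPoly.norm_evalEval_le (hP : IsNormalizedBiPoly d P) (p : ℂ × ℂ) :
    ‖P.evalEval p.1 p.2‖ ≤ biPolyBound p ^ d := by
  rw [evalEval_eq_eval_map, biPolyBound, mul_pow]
  exact norm_eval_le_mul_two_mul_max_pow (Polynomial.natDegree_map_le.trans hP.natDegree_le)
    (hP.norm_coeff_map_le p.1) p.2

end BiPoly

/-- A family of normalized bivariate polynomials `P i` with positive weights `1 / D i` for which the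
total weighted degree is finite, so that `∑ (1 / D i) log |P i|` is a plurisubharmonic function. -/
structure TestFamily (ι : Type*) where
  poly : ι → Polynomial (Polynomial ℂ)
  deg : ι → ℕ
  D : ι → ℕ
  isNormalized : ∀ i, IsNormalizedBiPoly (deg i) (poly i)
  D_ne_zero : ∀ i, D i ≠ 0
  summable_weight : Summable fun i => (deg i : ℝ) / D i

namespace TestFamily

variable {ι : Type*} (t : TestFamily ι)

/-- The number `|P i p| ^ (1 / D i)`, normalized so as not to exceed one. -/
def factor (i : ι) (p : ℂ × ℂ) : ℝ :=
  (‖(t.poly i).evalEval p.1 p.2‖ / biPolyBound p ^ t.deg i) ^ (1 / (t.D i : ℝ))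

/-- The total weighted degree. -/
def weight : ℝ := ∑' i, (t.deg i : ℝ) / t.D i

/-- The finite product of the `|P i p| ^ (1 / D i)` over `s`, with the remaining polynomials
replaced by their growth bounds. -/
def partialProd (s : Finset ι) (p : ℂ × ℂ) : ℝ :=
  biPolyBound p ^ t.weight * ∏ i ∈ s, t.factor i p

/-- The infinite product of the `|P i p| ^ (1 / D i)`, as the limit of the decreasing net of
partial products. Its logarithm is plurisubharmonic. -/
def infProd (p : ℂ × ℂ) : ℝ := ⨅ s : Finset ι, t.partialProd s p

lemma factor_nonneg (i : ι) (p : ℂ × ℂ) : 0 ≤ t.factor i p := by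
  have := biPolyBound_pos p
  unfold factor
  positivity

lemma factor_le_one (i : ι) (p : ℂ × ℂ) : t.factor i p ≤ 1 := by
  have := biPolyBound_pos p
  exact Real.rpow_le_one (by positivity)
    (div_le_one_of_le₀ ((t.isNormalized i).norm_evalEval_le p) (by positivity)) (by positivity)

lemma continuous_factor (i : ι) : Continuous (t.factor i) :=
  ((differentiable_evalEval (t.poly i)).continuous.norm.div₀ (by fun_prop)
    fun p => (pow_pos (biPolyBound_pos p) _).ne').rpow_const fun _ => Or.inr (by positivity)

lemma continuous_partialProd (s : Finset ι) : Continuous (t.partialProd s) :=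
  (continuous_biPolyBound.rpow_const fun p => Or.inl (biPolyBound_pos p).ne').mul
    (continuous_finsetProd _ fun i _ => t.continuous_factor i)

lemma partialProd_nonneg (s : Finset ι) (p : ℂ × ℂ) : 0 ≤ t.partialProd s p :=
  mul_nonneg (Real.rpow_nonneg (biPolyBound_pos p).le _)
    (Finset.prod_nonneg fun i _ => t.factor_nonneg i p)

lemma prod_factor_anti (p : ℂ × ℂ) : Antitone fun s : Finset ι => ∏ i ∈ s, t.factor i p :=
  Finset.prod_anti_set_of_le_one (t.factor_nonneg · p) (t.factor_le_one · p)

lemma partialProd_anti (p : ℂ × ℂ) : Antitone fun s => t.partialProd s p := fun _ _ h =>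
  mul_le_mul_of_nonneg_left (t.prod_factor_anti p h) (Real.rpow_nonneg (biPolyBound_pos p).le _)

lemma infProd_nonneg (p : ℂ × ℂ) : 0 ≤ t.infProd p :=
  le_ciInf fun s => t.partialProd_nonneg s p

lemma infProd_le_partialProd (s : Finset ι) (p : ℂ × ℂ) : t.infProd p ≤ t.partialProd s p :=
  ciInf_le ⟨0, Set.forall_mem_range.2 fun s => t.partialProd_nonneg s p⟩ s

lemma upperSemicontinuous_infProd : UpperSemicontinuous t.infProd :=
  upperSemicontinuous_ciInf (fun p => ⟨0, Set.forall_mem_range.2 fun s => t.partialProd_nonneg s p⟩)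
    fun s => (t.continuous_partialProd s).upperSemicontinuous

lemma infProd_eq_zero_iff {p : ℂ × ℂ} :
    t.infProd p = 0 ↔ ∀ ε > 0, ∃ s : Finset ι, ∏ i ∈ s, t.factor i p < ε := by
  have hb : 0 < biPolyBound p ^ t.weight := Real.rpow_pos_of_pos (biPolyBound_pos p) _
  constructor
  · intro h ε hε
    obtain ⟨s, hs⟩ := exists_lt_of_ciInf_lt
      (show t.infProd p < biPolyBound p ^ t.weight * ε by rw [h]; positivity)
    exact ⟨s, lt_of_mul_lt_mul_left hs hb.le⟩
  · intro h
    refine le_antisymm (le_of_forall_pos_le_add fun ε hε => ?_) (t.infProd_nonneg p)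
    obtain ⟨s, hs⟩ := h (ε / biPolyBound p ^ t.weight) (by positivity)
    rw [zero_add, ← mul_div_cancel₀ ε hb.ne']
    exact (t.infProd_le_partialProd s p).trans (mul_le_mul_of_nonneg_left hs.le hb.le)

lemma infProd_eq_zero_of_infinite {p : ℂ × ℂ} {a : ℝ} (ha : a < 1)
    (h : {i | t.factor i p ≤ a}.Infinite) : t.infProd p = 0 := by
  refine t.infProd_eq_zero_iff.2 fun ε hε => ?_
  obtain ⟨n, hn⟩ := exists_pow_lt_of_lt_one hε ha
  obtain ⟨s, hs, rfl⟩ := h.exists_subset_card_eq n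
  refine ⟨s, (Finset.prod_le_prod (fun i _ => t.factor_nonneg i p) fun i hi => hs hi).trans_lt ?_⟩
  rwa [Finset.prod_const]

end TestFamily

/-! ### Plurisubharmonicity -/

lemma elog_lt_coe {x : ℝ} (hx : 0 ≤ x) {a : ℝ} : elog x < (a : EReal) ↔ x < Real.exp a := by
  unfold elog
  split_ifs with h
  · simp [h, Real.exp_pos, EReal.bot_lt_coe]
  · rw [EReal.coe_lt_coe_iff, Real.log_lt_iff_lt_exp (hx.lt_of_ne' h)]

lemma elog_le_coe {x : ℝ} (hx : 0 ≤ x) {a : ℝ} : elog x ≤ (a : EReal) ↔ x ≤ Real.exp a := by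
  unfold elog
  split_ifs with h
  · simp [h, (Real.exp_pos a).le]
  · rw [EReal.coe_le_coe_iff, Real.log_le_iff_le_exp (hx.lt_of_ne' h)]

lemma elog_ne_top (x : ℝ) : elog x ≠ ⊤ := by
  unfold elog
  split_ifs <;> simp

lemma elog_eq_bot_iff {x : ℝ} : elog x = ⊥ ↔ x = 0 := by
  simp [elog]

lemma upperSemicontinuous_elog {X : Type*} [TopologicalSpace X] {f : X → ℝ} (h0 : ∀ x, 0 ≤ f x)
    (hf : UpperSemicontinuous f) : UpperSemicontinuous fun x => elog (f x) := by
  intro x y hy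
  induction y with
  | bot => exact absurd hy not_lt_bot
  | top => exact Eventually.of_forall fun x' => lt_top_iff_ne_top.2 (elog_ne_top _)
  | coe y =>
    filter_upwards [hf x _ ((elog_lt_coe (h0 x)).1 hy)] with x' hx'
    exact (elog_lt_coe (h0 x')).2 hx'

section MaximumPrinciple

variable {c : ℂ} {r : ℝ}

lemma le_of_eq_norm_of_forall_mem_sphere_le (hr : 0 < r) {φ : ℂ → ℝ}
    (hφ : ContinuousOn φ (closedBall c r)) {g : ℂ → ℂ} (hg : DifferentiableOn ℂ g (ball c r))
    (hgφ : ∀ z ∈ ball c r, φ z = ‖g z‖) {C : ℝ} (hC : ∀ z ∈ sphere c r, φ z ≤ C) :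
    ∀ z ∈ closedBall c r, φ z ≤ C := by
  obtain ⟨z₀, hz₀, hmax⟩ := (isCompact_closedBall c r).exists_isMaxOn ⟨c, by simp [hr.le]⟩ hφ
  suffices h : φ z₀ ≤ C from fun z hz => (hmax hz).trans h
  rcases (mem_closedBall.1 hz₀).eq_or_lt with hsph | hball
  · exact hC z₀ hsph
  have hgmax : IsMaxOn (norm ∘ g) (ball c r) z₀ := fun z hz => by
    simpa [← hgφ z hz, ← hgφ z₀ hball] using hmax (ball_subset_closedBall hz)
  have hconst : Set.EqOn φ (fun _ => φ z₀) (ball c r) := fun z hz => by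
    simpa [← hgφ z hz, ← hgφ z₀ hball] using Complex.norm_eqOn_of_isPreconnected_of_isMaxOn
      (convex_ball c r).isPreconnected isOpen_ball hg hball hgmax hz
  have hsph : c + r ∈ sphere c r := by simp [abs_of_pos hr]
  exact (hconst.of_subset_closure hφ continuousOn_const ball_subset_closedBall
    (closure_ball c hr.ne').ge (sphere_subset_closedBall hsph)).symm.trans_le (hC _ hsph)

lemma norm_le_exp_of_forall_mem_sphere {f : ℂ → ℂ} (hf : Differentiable ℂ f) (hr : 0 < r)
    {h : ℂ → ℝ} (hh : ContinuousOn h (closedBall c r)) {F : ℂ → ℂ}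
    (hF : DifferentiableOn ℂ F (ball c r)) (hFh : ∀ z ∈ ball c r, h z = (F z).re)
    (hs : ∀ z ∈ sphere c r, ‖f z‖ ≤ Real.exp (h z)) :
    ∀ z ∈ closedBall c r, ‖f z‖ ≤ Real.exp (h z) := by
  have key : ∀ z ∈ closedBall c r, ‖f z‖ * Real.exp (-h z) ≤ 1 := by
    refine le_of_eq_norm_of_forall_mem_sphere_le hr (φ := fun z => ‖f z‖ * Real.exp (-h z))
      (hf.continuous.norm.continuousOn.mul (Real.continuous_exp.comp_continuousOn hh.neg))
      (g := fun z => f z * Complex.exp (-F z)) (hf.differentiableOn.mul hF.neg.cexp)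
      (fun z hz => ?_) fun z hz => ?_
    · rw [norm_mul, Complex.norm_exp, Complex.neg_re, hFh z hz]
    · rw [Real.exp_neg, ← div_eq_mul_inv]
      exact div_le_one_of_le₀ (hs z hz) (Real.exp_pos _).le
  intro z hz
  have := key z hz
  rwa [Real.exp_neg, ← div_eq_mul_inv, div_le_one (Real.exp_pos _)] at this

end MaximumPrinciple

lemma exists_forall_lt_of_antitone {X : Type*} [TopologicalSpace X] {K : Set X} (hK : IsCompact K)
    {α : Type*} [SemilatticeSup α] [Nonempty α] {f : α → X → ℝ} (hf : ∀ a, Continuous (f a))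
    (hanti : ∀ x, Antitone fun a => f a x) {g : X → ℝ} (hg : ContinuousOn g K)
    (h : ∀ x ∈ K, ∃ a, f a x < g x) : ∃ a, ∀ x ∈ K, f a x < g x := by
  refine hK.induction_on (p := fun S => ∃ a, ∀ x ∈ S, f a x < g x) ?_ ?_ ?_ fun x hx => ?_
  · exact ⟨Classical.arbitrary α, by simp⟩
  · exact fun s t hst ⟨a, ha⟩ => ⟨a, fun x hx => ha x (hst hx)⟩
  · rintro s t ⟨a, ha⟩ ⟨b, hb⟩
    refine ⟨a ⊔ b, ?_⟩
    rintro x (hx | hx)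
    · exact (hanti x le_sup_left).trans_lt (ha x hx)
    · exact (hanti x le_sup_right).trans_lt (hb x hx)
  · obtain ⟨a, ha⟩ := h x hx
    exact ⟨_, (hf a).continuousWithinAt.eventually_lt (hg x hx) ha, a, fun y hy => hy⟩

namespace TestFamily

variable {ι : Type*} (t : TestFamily ι)

/-- The finite product of the `|P i p| ^ (1 / D i)` over `s`. -/
def rootProd (s : Finset ι) (p : ℂ × ℂ) : ℝ :=
  ∏ i ∈ s, ‖(t.poly i).evalEval p.1 p.2‖ ^ (1 / (t.D i : ℝ))

lemma rootProd_nonneg (s : Finset ι) (p : ℂ × ℂ) : 0 ≤ t.rootProd s p :=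
  Finset.prod_nonneg fun _ _ => by positivity

lemma sum_weight_le_weight (s : Finset ι) : ∑ i ∈ s, (t.deg i : ℝ) / t.D i ≤ t.weight :=
  t.summable_weight.sum_le_tsum s fun _ _ => by positivity

lemma partialProd_eq_rootProd_mul (s : Finset ι) (p : ℂ × ℂ) :
    t.partialProd s p =
      t.rootProd s p * biPolyBound p ^ (t.weight - ∑ i ∈ s, (t.deg i : ℝ) / t.D i) := by
  have hb := biPolyBound_pos p
  have hfactor : ∀ i, t.factor i p = ‖(t.poly i).evalEval p.1 p.2‖ ^ (1 / (t.D i : ℝ)) /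
      biPolyBound p ^ ((t.deg i : ℝ) / t.D i) := fun i => by
    rw [factor, Real.div_rpow (norm_nonneg _) (by positivity), ← Real.rpow_natCast,
      ← Real.rpow_mul hb.le, mul_one_div]
  rw [partialProd, rootProd, Real.rpow_sub hb, Real.rpow_sum_of_pos hb]
  simp only [hfactor, Finset.prod_div_distrib]
  ring

lemma rootProd_le_partialProd (s : Finset ι) (p : ℂ × ℂ) : t.rootProd s p ≤ t.partialProd s p := by
  rw [partialProd_eq_rootProd_mul]
  exact le_mul_of_one_le_right (t.rootProd_nonneg s p)
    (Real.one_le_rpow (one_le_biPolyBound p) (sub_nonneg.2 (t.sum_weight_le_weight s)))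

lemma rootProd_pow_prod_eq_norm (s : Finset ι) (p : ℂ × ℂ) :
    t.rootProd s p ^ (∏ i ∈ s, t.D i) =
      ‖∏ i ∈ s, (t.poly i).evalEval p.1 p.2 ^ ((∏ j ∈ s, t.D j) / t.D i)‖ := by
  rw [rootProd, norm_prod, ← Finset.prod_pow]
  refine Finset.prod_congr rfl fun i hi => ?_
  conv_lhs => rw [← Nat.mul_div_cancel' (Finset.dvd_prod_of_mem t.D hi), pow_mul]
  rw [norm_pow, one_div, Real.rpow_inv_natCast_pow (norm_nonneg _) (t.D_ne_zero i)]

lemma rootProd_le_exp_of_forall_mem_sphere (s : Finset ι) {ℓ : ℂ → ℂ × ℂ}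
    (hℓ : Differentiable ℂ ℓ) {c : ℂ} {r : ℝ} (hr : 0 < r) {h : ℂ → ℝ}
    (hh : ContinuousOn h (closedBall c r)) {F : ℂ → ℂ} (hF : DifferentiableOn ℂ F (ball c r))
    (hFh : ∀ z ∈ ball c r, h z = (F z).re)
    (hs : ∀ z ∈ sphere c r, t.rootProd s (ℓ z) ≤ Real.exp (h z)) :
    ∀ z ∈ closedBall c r, t.rootProd s (ℓ z) ≤ Real.exp (h z) := by
  set N := ∏ i ∈ s, t.D i with hN
  have hN0 : N ≠ 0 := Finset.prod_ne_zero_iff.2 fun i _ => t.D_ne_zero i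
  have hdiff : Differentiable ℂ fun z =>
      ∏ i ∈ s, (t.poly i).evalEval (ℓ z).1 (ℓ z).2 ^ (N / t.D i) :=
    Differentiable.fun_finsetProd fun i _ => ((differentiable_evalEval (t.poly i)).comp hℓ).pow _
  intro z hz
  have hmax := norm_le_exp_of_forall_mem_sphere hdiff hr (h := fun z => N * h z)
    (continuousOn_const.mul hh) (F := fun z => N * F z) (hF.const_mul _)
    (fun z hz => by simp [hFh z hz])
    (fun z hz => by
      rw [← rootProd_pow_prod_eq_norm, ← hN, Real.exp_nat_mul]
      exact pow_le_pow_left₀ (t.rootProd_nonneg s _) (hs z hz) _) z hz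
  rw [← rootProd_pow_prod_eq_norm, ← hN, Real.exp_nat_mul] at hmax
  exact le_of_pow_le_pow_left₀ hN0 (Real.exp_pos _).le hmax

lemma exists_rpow_weight_sub_le {K : Set (ℂ × ℂ)} (hK : IsCompact K) {δ : ℝ} (hδ : 0 < δ) :
    ∃ s₀, ∀ s ⊇ s₀, ∀ p ∈ K,
      biPolyBound p ^ (t.weight - ∑ i ∈ s, (t.deg i : ℝ) / t.D i) ≤ Real.exp δ := by
  obtain ⟨B, hB⟩ := hK.bddAbove_image continuous_biPolyBound.continuousOn
  have hlim : Tendsto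
      (fun s : Finset ι => max 1 B ^ (t.weight - ∑ i ∈ s, (t.deg i : ℝ) / t.D i)) atTop
      (nhds 1) := by
    have hsum : Tendsto (fun s : Finset ι => ∑ i ∈ s, (t.deg i : ℝ) / t.D i) atTop
        (nhds t.weight) := by
      simpa [HasSum, weight] using t.summable_weight.hasSum
    have hB1 : max 1 B ≠ 0 := (lt_max_of_lt_left one_pos).ne'
    simpa [Function.comp_def] using
      ((Real.continuous_const_rpow hB1).tendsto _).comp (hsum.const_sub t.weight)
  obtain ⟨s₀, hs₀⟩ := eventually_atTop.1
    (hlim.eventually_le_const (Real.one_lt_exp_iff.2 hδ))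
  refine ⟨s₀, fun s hs p hp => le_trans ?_ (hs₀ s hs)⟩
  exact Real.rpow_le_rpow (biPolyBound_pos p).le ((hB ⟨p, hp, rfl⟩).trans (le_max_right _ _))
    (sub_nonneg.2 (t.sum_weight_le_weight s))

lemma infProd_le_exp_of_forall_mem_sphere {ℓ : ℂ → ℂ × ℂ} (hℓ : Differentiable ℂ ℓ) {c : ℂ}
    {r : ℝ} (hr : 0 < r) {h : ℂ → ℝ} (hh : ContinuousOn h (closedBall c r)) {F : ℂ → ℂ}
    (hF : DifferentiableOn ℂ F (ball c r)) (hFh : ∀ z ∈ ball c r, h z = (F z).re)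
    (hs : ∀ z ∈ sphere c r, t.infProd (ℓ z) ≤ Real.exp (h z)) :
    ∀ z ∈ closedBall c r, t.infProd (ℓ z) ≤ Real.exp (h z) := by
  classical
  intro z hz
  have hlim : Tendsto (fun δ : ℝ => Real.exp (h z + δ) * Real.exp δ) (nhdsWithin 0 (Set.Ioi 0))
      (nhds (Real.exp (h z))) := by
    have : ContinuousAt (fun δ : ℝ => Real.exp (h z + δ) * Real.exp δ) 0 := by fun_prop
    simpa using this.tendsto.mono_left nhdsWithin_le_nhds
  refine ge_of_tendsto hlim (eventually_nhdsWithin_of_forall fun δ (hδ : 0 < δ) => ?_)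
  have hhδ : ContinuousOn (fun z => h z + δ) (closedBall c r) := hh.add continuousOn_const
  obtain ⟨s₁, hs₁⟩ := exists_forall_lt_of_antitone (isCompact_sphere c r)
    (f := fun s z => t.partialProd s (ℓ z))
    (fun s => (t.continuous_partialProd s).comp hℓ.continuous) (fun z => t.partialProd_anti (ℓ z))
    (Real.continuous_exp.comp_continuousOn (hhδ.mono sphere_subset_closedBall))
    fun z hz => exists_lt_of_ciInf_lt
      ((hs z hz).trans_lt (Real.exp_lt_exp.2 (lt_add_of_pos_right _ hδ)))
  obtain ⟨s₂, hs₂⟩ := t.exists_rpow_weight_sub_le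
    ((isCompact_closedBall c r).image hℓ.continuous) hδ
  have hroot := t.rootProd_le_exp_of_forall_mem_sphere (s₁ ∪ s₂) hℓ hr hhδ
    (hF.add (differentiableOn_const (δ : ℂ))) (fun z hz => by simp [hFh z hz])
    (fun z hz => (t.rootProd_le_partialProd _ _).trans
      ((t.partialProd_anti _ Finset.subset_union_left).trans (hs₁ z hz).le)) z hz
  refine (t.infProd_le_partialProd (s₁ ∪ s₂) _).trans ?_
  rw [partialProd_eq_rootProd_mul]
  have := hs₂ (s₁ ∪ s₂) Finset.subset_union_right (ℓ z) ⟨z, hz, rfl⟩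
  have := biPolyBound_pos (ℓ z)
  gcongr

lemma pshFn_elog_infProd : PshFn fun p => elog (t.infProd p) := by
  have husc := upperSemicontinuous_elog t.infProd_nonneg t.upperSemicontinuous_infProd
  refine ⟨husc, fun p => elog_ne_top _, fun a v =>
    ⟨husc.comp (by fun_prop), fun w => elog_ne_top _, fun c r hr h hh hF hs z hz => ?_⟩⟩
  obtain ⟨F, hF, hFh⟩ := hF
  exact (elog_le_coe (t.infProd_nonneg _)).2 <|
    t.infProd_le_exp_of_forall_mem_sphere (by fun_prop : Differentiable ℂ fun w : ℂ => a + w • v)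
      hr hh hF hFh (fun z hz => (elog_le_coe (t.infProd_nonneg _)).1 (hs z hz)) z hz

end TestFamily

section GenericPoint

variable {ι : Type*} [Countable ι]

lemma ae_summable_norm_of_summable_integral_norm {X E : Type*} [MeasurableSpace X]
    [NormedAddCommGroup E] {μ : MeasureTheory.Measure X} {f : ι → X → E}
    (hf : ∀ i, MeasureTheory.Integrable (f i) μ) (hs : Summable fun i => ∫ x, ‖f i x‖ ∂μ) :
    ∀ᵐ x ∂μ, Summable fun i => ‖f i x‖ := by
  have hmeas : ∀ i, AEMeasurable (fun x => ENNReal.ofReal ‖f i x‖) μ := fun i =>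
    (hf i).norm.aemeasurable.ennreal_ofReal
  have hfin : ∫⁻ x, ∑' i, ENNReal.ofReal ‖f i x‖ ∂μ ≠ ⊤ := by
    rw [MeasureTheory.lintegral_tsum hmeas]
    simp_rw [fun i => (MeasureTheory.ofReal_integral_eq_lintegral_ofReal (hf i).norm
      (Eventually.of_forall fun x => norm_nonneg (f i x))).symm]
    exact hs.tsum_ofReal_ne_top
  filter_upwards [MeasureTheory.ae_lt_top' (AEMeasurable.tsum hmeas) hfin] with x hx
  simpa using ENNReal.summable_toReal hx.ne

lemma exists_mem_sphere_summable_of_circleIntegrable {c : ℂ} {r : ℝ} (hr : r ≠ 0)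
    {f : ι → ℂ → ℝ} (hf : ∀ i, CircleIntegrable (f i) c r)
    (hs : Summable fun i => Real.circleAverage (fun z => |f i z|) c r)
    {S : Set ℂ} (hS : S.Countable) : ∃ z ∈ sphere c |r|, z ∉ S ∧ Summable fun i => f i z := by
  set μ := MeasureTheory.volume.restrict (Set.Ioc 0 (2 * Real.pi))
  have hμ : (MeasureTheory.ae μ).NeBot := MeasureTheory.ae_neBot.2 <| by
    rw [Ne, MeasureTheory.Measure.restrict_eq_zero]
    simp [Real.pi_pos]
  have hint : ∀ i, MeasureTheory.Integrable (fun θ => f i (circleMap c r θ)) μ := fun i =>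
    (intervalIntegrable_iff_integrableOn_Ioc_of_le Real.two_pi_pos.le).1 (hf i)
  have hsum : Summable fun i => ∫ θ, ‖f i (circleMap c r θ)‖ ∂μ := by
    refine (hs.mul_left (2 * Real.pi)).congr fun i => ?_
    rw [Real.circleAverage_def, intervalIntegral.integral_of_le Real.two_pi_pos.le, smul_eq_mul,
      mul_inv_cancel_left₀ Real.two_pi_pos.ne']
    simp [μ]
  obtain ⟨θ, hθ, hθS⟩ := ((ae_summable_norm_of_summable_integral_norm hint hsum).and
    ((hS.preimage_circleMap c hr).ae_notMem μ)).exists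
  exact ⟨circleMap c r θ, circleMap_mem_sphere' c r θ, hθS, hθ.of_norm⟩

lemma log_norm_coeff_le_mahler {g : Polynomial ℂ} {d : ℕ} (hd : g.natDegree ≤ d) {k : ℕ}
    (hk : g.coeff k ≠ 0) :
    Real.log ‖g.coeff k‖ ≤
      d * Real.log 2 + Real.circleAverage (fun z => Real.log ‖g.eval z‖) 0 1 := by
  have hg : g ≠ 0 := fun h => hk (by simp [h])
  have hM := Polynomial.mahlerMeasure_pos_of_ne_zero hg
  have hchoose : ((g.natDegree.choose k : ℕ) : ℝ) ≤ 2 ^ d := by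
    exact_mod_cast (Nat.choose_le_two_pow _ _).trans (Nat.pow_le_pow_right two_pos hd)
  have hcoeff : ‖g.coeff k‖ ≤ 2 ^ d * g.mahlerMeasure :=
    (Polynomial.norm_coeff_le_choose_mul_mahlerMeasure k g).trans (by gcongr)
  calc Real.log ‖g.coeff k‖ ≤ Real.log (2 ^ d * g.mahlerMeasure) :=
        Real.log_le_log (norm_pos_iff.2 hk) hcoeff
    _ = d * Real.log 2 + Real.log g.mahlerMeasure := by
        rw [Real.log_mul (by positivity) hM.ne', Real.log_pow]
    _ = _ := by
        rw [← Polynomial.logMahlerMeasure_eq_log_MahlerMeasure, Polynomial.logMahlerMeasure_def]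

lemma circleAverage_abs_log_norm_eval_le {g : Polynomial ℂ} {d : ℕ} (hd : g.natDegree ≤ d)
    (hcoeff : ∀ j, ‖g.coeff j‖ ≤ 2 ^ d) {k : ℕ} (hk : g.coeff k ≠ 0) :
    Real.circleAverage (fun z => |Real.log ‖g.eval z‖|) 0 1 ≤
      5 * Real.log 2 * d - Real.log ‖g.coeff k‖ := by
  have hint : CircleIntegrable (fun z => Real.log ‖g.eval z‖) 0 1 :=
    (circleIntegrable_def _ _ _).2 (Polynomial.intervalIntegrable_mahlerMeasure g)
  have hupper : ∀ z ∈ sphere (0 : ℂ) |1|, Real.log ‖g.eval z‖ ≤ 2 * (d * Real.log 2) := by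
    intro z hz
    have hz1 : ‖z‖ = 1 := by simpa using hz
    have hbound := norm_eval_le_mul_two_mul_max_pow hd hcoeff z
    rw [hz1, max_self, mul_one, ← pow_add] at hbound
    rcases (norm_nonneg (g.eval z)).eq_or_lt with h0 | hpos
    · rw [← h0, Real.log_zero]
      positivity
    · calc Real.log ‖g.eval z‖ ≤ Real.log (2 ^ (d + d)) := Real.log_le_log hpos hbound
        _ = 2 * (d * Real.log 2) := by rw [Real.log_pow]; push_cast; ring
  have habs : ∀ z ∈ sphere (0 : ℂ) |1|,
      |Real.log ‖g.eval z‖| ≤ 4 * (d * Real.log 2) - Real.log ‖g.eval z‖ := fun z hz => by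
    have : 0 ≤ d * Real.log 2 := by positivity
    rw [abs_le]
    constructor <;> linarith [hupper z hz]
  have hmono : Real.circleAverage (fun z => |Real.log ‖g.eval z‖|) 0 1 ≤
      Real.circleAverage (fun z => 4 * (d * Real.log 2) - Real.log ‖g.eval z‖) 0 1 :=
    Real.circleAverage_mono hint.abs ((circleIntegrable_const _ _ _).sub hint) habs
  have hsub := Real.circleAverage_fun_sub (circleIntegrable_const (4 * (d * Real.log 2)) 0 1) hint
  rw [Real.circleAverage_const] at hsub
  have hmahler := log_norm_coeff_le_mahler hd hk
  linarith

lemma exists_summable_log_norm_eval {g : ι → Polynomial ℂ} {d k : ι → ℕ} {w : ι → ℝ}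
    (hw : ∀ i, 0 ≤ w i) (hd : ∀ i, (g i).natDegree ≤ d i)
    (hcoeff : ∀ i j, ‖(g i).coeff j‖ ≤ 2 ^ d i)
    (hk : ∀ i, (g i).coeff (k i) ≠ 0) (hwd : Summable fun i => w i * d i)
    (hwk : Summable fun i => w i * Real.log ‖(g i).coeff (k i)‖) :
    ∃ z : ℂ, ‖z‖ = 1 ∧ (∀ i, (g i).eval z ≠ 0) ∧
      Summable fun i => w i * Real.log ‖(g i).eval z‖ := by
  have hg : ∀ i, g i ≠ 0 := fun i h => hk i (by simp [h])
  have hint : ∀ i, CircleIntegrable (fun z => w i * Real.log ‖(g i).eval z‖) 0 1 := fun i =>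
    ((circleIntegrable_def _ _ _).2 (Polynomial.intervalIntegrable_mahlerMeasure (g i))).const_smul
  have hsum : Summable fun i =>
      Real.circleAverage (fun z => |w i * Real.log ‖(g i).eval z‖|) 0 1 := by
    refine Summable.of_nonneg_of_le (fun i => Real.circleAverage_nonneg_of_nonneg
      fun _ _ => abs_nonneg _) (fun i => ?_) ((hwd.mul_left (5 * Real.log 2)).sub hwk)
    have := mul_le_mul_of_nonneg_left
      (circleAverage_abs_log_norm_eval_le (hd i) (hcoeff i) (hk i)) (hw i)
    simp_rw [abs_mul, abs_of_nonneg (hw i), ← smul_eq_mul (w i), Real.circleAverage_fun_smul,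
      smul_eq_mul]
    linarith
  obtain ⟨z, hz, hroot, hsumz⟩ :=
    exists_mem_sphere_summable_of_circleIntegrable one_ne_zero hint hsum
    (S := ⋃ i, (g i).rootSet ℂ)
    (Set.countable_iUnion fun i => (Polynomial.rootSet_finite (g i) ℂ).countable)
  refine ⟨z, by simpa using hz, fun i hi => hroot (Set.mem_iUnion.2 ⟨i, ?_⟩), hsumz⟩
  exact (Polynomial.mem_rootSet).2 ⟨hg i, by simpa using hi⟩

namespace TestFamily

variable (t : TestFamily ι)

lemma exists_summable_log_norm_evalEval : ∃ p : ℂ × ℂ,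
    (∀ i, (t.poly i).evalEval p.1 p.2 ≠ 0) ∧
      Summable fun i => 1 / (t.D i : ℝ) * Real.log ‖(t.poly i).evalEval p.1 p.2‖ := by
  choose j k hjk using fun i => (t.isNormalized i).exists_norm_coeff_eq_one
  have hw : ∀ i, 0 ≤ 1 / (t.D i : ℝ) := fun i => by positivity
  have hwd : Summable fun i => 1 / (t.D i : ℝ) * t.deg i :=
    t.summable_weight.congr fun i => by ring
  obtain ⟨z, hz, hz0, hzs⟩ := exists_summable_log_norm_eval (g := fun i => (t.poly i).coeff (j i))
    (k := k) hw (fun i => (t.isNormalized i).natDegree_coeff_le (j i))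
    (fun i a => ((t.isNormalized i).norm_coeff_le_one _ a).trans (one_le_pow₀ one_le_two))
    (fun i h => by simpa [h] using hjk i) hwd (by simp [hjk])
  obtain ⟨w, -, hw0, hws⟩ := exists_summable_log_norm_eval
    (g := fun i => (t.poly i).map (Polynomial.evalRingHom z)) (k := j) hw
    (fun i => Polynomial.natDegree_map_le.trans (t.isNormalized i).natDegree_le)
    (fun i a => by simpa [hz] using (t.isNormalized i).norm_coeff_map_le z a)
    (fun i => by simpa [Polynomial.coeff_map] using hz0 i) hwd
    (by simpa [Polynomial.coeff_map] using hzs)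
  exact ⟨(z, w), fun i => by simpa [evalEval_eq_eval_map] using hw0 i,
    by simpa [evalEval_eq_eval_map] using hws⟩

lemma exists_infProd_ne_zero : ∃ p, t.infProd p ≠ 0 := by
  obtain ⟨p, hp0, hps⟩ := t.exists_summable_log_norm_evalEval
  have hroot : ∀ s, t.rootProd s p = Real.exp
      (∑ i ∈ s, 1 / (t.D i : ℝ) * Real.log ‖(t.poly i).evalEval p.1 p.2‖) := fun s => by
    rw [rootProd, Real.exp_sum]
    refine Finset.prod_congr rfl fun i _ => ?_
    rw [Real.rpow_def_of_pos (norm_pos_iff.2 (hp0 i)), mul_comm]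
  have hlower : ∀ s, Real.exp
      (-∑' i, |1 / (t.D i : ℝ) * Real.log ‖(t.poly i).evalEval p.1 p.2‖|) ≤ t.partialProd s p := by
    refine fun s => le_trans ?_ (t.rootProd_le_partialProd s p)
    rw [hroot]
    refine Real.exp_le_exp.2 (neg_le_of_abs_le ((Finset.abs_sum_le_sum_abs _ _).trans ?_))
    exact hps.abs.sum_le_tsum s fun _ _ => abs_nonneg _
  exact ⟨p, ((Real.exp_pos _).trans_le (le_ciInf hlower)).ne'⟩

end TestFamily

end GenericPoint

/-! ### Thin sets -/

section ThinSets

/-- A thin set: one on which the infinite product of some countable test family vanishes. Thin sets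
are pluripolar, with an explicit witness. -/
def Thin (S : Set (ℂ × ℂ)) : Prop :=
  ∃ (ι : Type) (_ : Countable ι) (t : TestFamily ι), ∀ p ∈ S, t.infProd p = 0

/-- A set on which normalized bivariate polynomials are exponentially small in their degree, at any
prescribed rate: the two-dimensional analogue of `HasZeroChebyshev`. -/
def HasZeroBiChebyshev (K : Set (ℂ × ℂ)) : Prop :=
  ∀ C : ℝ, ∃ d P, 1 ≤ d ∧ IsNormalizedBiPoly d P ∧
    ∀ p ∈ K, ‖P.evalEval p.1 p.2‖ ≤ Real.exp (-C * d)

lemma Thin.mono {S T : Set (ℂ × ℂ)} (hT : Thin T) (h : S ⊆ T) : Thin S := by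
  obtain ⟨ι, hι, t, ht⟩ := hT
  exact ⟨ι, hι, t, fun p hp => ht p (h hp)⟩

lemma Thin.pluripolar {S : Set (ℂ × ℂ)} (hS : Thin S) : Pluripolar S := by
  obtain ⟨ι, _, t, ht⟩ := hS
  obtain ⟨p, hp⟩ := t.exists_infProd_ne_zero
  exact ⟨_, t.pshFn_elog_infProd, ⟨p, mt elog_eq_bot_iff.1 hp⟩,
    fun q hq => elog_eq_bot_iff.2 (ht q hq)⟩

/-- The disjoint union of two test families. -/
def TestFamily.sum {ι κ : Type*} (a : TestFamily ι) (b : TestFamily κ) : TestFamily (ι ⊕ κ) where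
  poly := Sum.elim a.poly b.poly
  deg := Sum.elim a.deg b.deg
  D := Sum.elim a.D b.D
  isNormalized := Sum.rec a.isNormalized b.isNormalized
  D_ne_zero := Sum.rec a.D_ne_zero b.D_ne_zero
  summable_weight := Summable.sum _ a.summable_weight b.summable_weight

lemma Thin.union {S T : Set (ℂ × ℂ)} (hS : Thin S) (hT : Thin T) : Thin (S ∪ T) := by
  obtain ⟨ι, _, a, ha⟩ := hS
  obtain ⟨κ, _, b, hb⟩ := hT
  refine ⟨ι ⊕ κ, inferInstance, a.sum b, fun p hp => TestFamily.infProd_eq_zero_iff _ |>.2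
    fun ε hε => ?_⟩
  rcases hp with hp | hp
  · obtain ⟨s, hs⟩ := a.infProd_eq_zero_iff.1 (ha p hp) ε hε
    exact ⟨s.map Function.Embedding.inl, by rwa [Finset.prod_map]⟩
  · obtain ⟨s, hs⟩ := b.infProd_eq_zero_iff.1 (hb p hp) ε hε
    exact ⟨s.map Function.Embedding.inr, by rwa [Finset.prod_map]⟩

lemma TestFamily.factor_le_exp_neg_one {ι : Type*} (t : TestFamily ι) {i : ι} {p : ℂ × ℂ}
    (h : ‖(t.poly i).evalEval p.1 p.2‖ ≤ Real.exp (-t.D i)) : t.factor i p ≤ Real.exp (-1) := by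
  have hD : (t.D i : ℝ) ≠ 0 := Nat.cast_ne_zero.2 (t.D_ne_zero i)
  calc t.factor i p ≤ Real.exp (-t.D i) ^ (1 / (t.D i : ℝ)) := by
        have := biPolyBound_pos p
        exact Real.rpow_le_rpow (by positivity)
          ((div_le_self (norm_nonneg _) (one_le_pow₀ (one_le_biPolyBound p))).trans h)
          (by positivity)
    _ = Real.exp (-1) := by
        rw [← Real.exp_mul]
        field_simp

lemma thin_iUnion_of_hasZeroBiChebyshev {κ : Type} [Countable κ] {K : κ → Set (ℂ × ℂ)}
    (hK : ∀ k, HasZeroBiChebyshev (K k)) : Thin (⋃ k, K k) := by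
  have := Encodable.ofCountable κ
  choose d P hd hP hsmall using fun i : κ × ℕ => hK i.1 (2 ^ Encodable.encode i)
  let t : TestFamily (κ × ℕ) :=
    { poly := P
      deg := d
      D := fun i => d i * 2 ^ Encodable.encode i
      isNormalized := hP
      D_ne_zero := fun i => (Nat.mul_pos (hd i) (by positivity)).ne'
      summable_weight := summable_geometric_two_encode.congr fun i => by
        have : (d i : ℝ) ≠ 0 := Nat.cast_ne_zero.2 (Nat.one_le_iff_ne_zero.1 (hd i))
        push_cast
        rw [one_div, inv_pow]
        field_simp }
  refine ⟨κ × ℕ, inferInstance, t, fun p hp => ?_⟩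
  obtain ⟨k, hk⟩ := Set.mem_iUnion.1 hp
  refine t.infProd_eq_zero_of_infinite (a := Real.exp (-1)) (by simp) <|
    (Set.infinite_range_of_injective (Prod.mk_right_injective k)).mono ?_
  rintro _ ⟨m, rfl⟩
  refine t.factor_le_exp_neg_one ((hsmall (k, m) p hk).trans_eq ?_)
  simp [t, mul_comm]

lemma HasZeroChebyshev.hasZeroBiChebyshev {K : Set ℂ} (hK : HasZeroChebyshev K) :
    HasZeroBiChebyshev {p | p.1 ∈ K} := by
  intro C
  obtain ⟨T, hT, hd, hsmall⟩ := hK C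
  obtain ⟨i, -, hmax⟩ :=
    (Finset.range (T.natDegree + 1)).exists_max_image (‖T.coeff ·‖) ⟨0, by simp⟩
  have hle : ∀ j, ‖T.coeff j‖ ≤ ‖T.coeff i‖ := fun j => by
    by_cases hj : j < T.natDegree + 1
    · exact hmax j (Finset.mem_range.2 hj)
    · simp [Polynomial.coeff_eq_zero_of_natDegree_lt (show T.natDegree < j by lia)]
  have hone : 1 ≤ ‖T.coeff i‖ := by simpa [hT.coeff_natDegree] using hle T.natDegree
  have hpos := one_pos.trans_le hone
  have hcoeff : ∀ j, ‖(Polynomial.C (T.coeff i)⁻¹ * T).coeff j‖ = ‖T.coeff j‖ / ‖T.coeff i‖ :=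
    fun j => by rw [Polynomial.coeff_C_mul, norm_mul, norm_inv, inv_mul_eq_div]
  refine ⟨T.natDegree, Polynomial.C (Polynomial.C (T.coeff i)⁻¹ * T), hd,
    ⟨?_, fun j => ?_, fun j k => ?_, 0, i, ?_⟩, fun p hp => ?_⟩
  · rw [Polynomial.natDegree_C]
    exact Nat.zero_le _
  · rw [Polynomial.coeff_C]
    split_ifs
    · exact Polynomial.natDegree_C_mul_le _ _
    · simp
  · rw [Polynomial.coeff_C]
    split_ifs
    · rw [hcoeff]
      exact div_le_one_of_le₀ (hle k) hpos.le
    · simp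
  · rw [Polynomial.coeff_C_zero, hcoeff, div_self hpos.ne']
  · rw [evalEval_eq_eval_map, Polynomial.map_C, Polynomial.eval_C, Polynomial.coe_evalRingHom,
      Polynomial.eval_C_mul, norm_mul, norm_inv, inv_mul_eq_div]
    exact (div_le_self (norm_nonneg _) hone).trans (hsmall p.1 hp)

end ThinSets

/-! ### Fekete points -/

section Fekete

lemma exists_orthonormalBasis_mem {ι : Type*} [Fintype ι] (W : Submodule ℂ (EuclideanSpace ℂ ι)) :
    ∃ (U : OrthonormalBasis ι ℂ (EuclideanSpace ℂ ι)) (s : Finset ι),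
      s.card = Module.finrank ℂ W ∧ ∀ i ∈ s, U i ∈ W := by
  classical
  obtain ⟨s, -, hs⟩ := Finset.exists_subset_card_eq (s := (Finset.univ : Finset ι))
    (n := Module.finrank ℂ W) (by simpa using W.finrank_le)
  let σ := s.equivFinOfCardEq hs
  let v : ι → EuclideanSpace ℂ ι := fun i =>
    if h : i ∈ s then (stdOrthonormalBasis ℂ W (σ ⟨i, h⟩) : EuclideanSpace ℂ ι) else 0
  have hv : ∀ i : s, v i = stdOrthonormalBasis ℂ W (σ i) := fun i => dif_pos i.2
  have hortho : Orthonormal ℂ ((s : Set ι).domRestrict v) := by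
    rw [show (s : Set ι).domRestrict v = (W.subtypeₗᵢ ∘ stdOrthonormalBasis ℂ W) ∘ σ from funext hv]
    exact ((stdOrthonormalBasis ℂ W).orthonormal.comp_linearIsometry W.subtypeₗᵢ).comp σ σ.injective
  obtain ⟨U, hU⟩ := hortho.exists_orthonormalBasis_extension_of_card_eq (by simp)
  refine ⟨U, s, hs, fun i hi => ?_⟩
  rw [hU i hi, hv ⟨i, hi⟩]
  exact (stdOrthonormalBasis ℂ W _).2

/-- The matrix of values of the functions `e` at the points `x`. -/
def evalMatrix {X ι : Type*} (e : ι → X → ℂ) (x : ι → X) : Matrix ι ι ℂ :=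
  Matrix.of fun a b => e a (x b)

variable {X ι : Type*} [Fintype ι] [DecidableEq ι] {e : ι → X → ℂ} {x y : ι → X} {L L' : Set X}

/-- The functions in the span of `e` that are dual to evaluation at the points `x`, when the
determinant of `evalMatrix e x` does not vanish: Lagrange interpolation at the nodes `x`. -/
def interpBasis (e : ι → X → ℂ) (x : ι → X) (b : ι) (p : X) : ℂ :=
  ∑ a, (evalMatrix e x)⁻¹ b a * e a p

/-- The points `x` maximize `|det (evalMatrix e ·)|` among all tuples of points of `L`. -/
structure IsFekete (e : ι → X → ℂ) (L : Set X) (x : ι → X) : Prop where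
  mem : ∀ i, x i ∈ L
  norm_det_le : ∀ y : ι → X, (∀ i, y i ∈ L) → ‖(evalMatrix e y).det‖ ≤ ‖(evalMatrix e x).det‖

/-- The maximum of `|det (evalMatrix e x)|` over all tuples of points of `L`. -/
def maxDet (e : ι → X → ℂ) (L : Set X) : ℝ :=
  ⨆ x : ι → L, ‖(evalMatrix e fun i => x i).det‖

lemma interpBasis_eq_mulVec (e : ι → X → ℂ) (x : ι → X) (p : X) :
    (interpBasis e x · p) = (evalMatrix e x)⁻¹.mulVec (e · p) := rfl

lemma of_interpBasis_eq_mul (e : ι → X → ℂ) (x y : ι → X) :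
    (Matrix.of fun b j => interpBasis e x b (y j)) = (evalMatrix e x)⁻¹ * evalMatrix e y := by
  ext b j
  simp [interpBasis, Matrix.mul_apply, evalMatrix]

lemma sum_mul_interpBasis (hx : (evalMatrix e x).det ≠ 0) {f : X → ℂ}
    (hf : f ∈ Submodule.span ℂ (Set.range e)) (p : X) :
    ∑ b, f (x b) * interpBasis e x b p = f p := by
  obtain ⟨c, rfl⟩ := (Submodule.mem_span_range_iff_exists_fun ℂ).1 hf
  have heval : (fun b => (∑ a, c a • e a) (x b)) = Matrix.vecMul c (evalMatrix e x) := by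
    ext b
    simp [Matrix.vecMul, dotProduct, evalMatrix]
  calc ∑ b, (∑ a, c a • e a) (x b) * interpBasis e x b p
      = Matrix.vecMul c (evalMatrix e x) ⬝ᵥ (evalMatrix e x)⁻¹.mulVec (e · p) := by
        rw [← heval, ← interpBasis_eq_mulVec]
        rfl
    _ = c ⬝ᵥ (e · p) := by
        rw [Matrix.dotProduct_mulVec, Matrix.vecMul_vecMul,
          Matrix.mul_nonsing_inv _ (isUnit_iff_ne_zero.2 hx), Matrix.vecMul_one]
    _ = (∑ a, c a • e a) p := by simp [dotProduct]

lemma det_evalMatrix_eq_mul (hx : (evalMatrix e x).det ≠ 0) (y : ι → X) :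
    (evalMatrix e y).det =
      (evalMatrix e x).det * (Matrix.of fun b j => interpBasis e x b (y j)).det := by
  rw [of_interpBasis_eq_mul, ← Matrix.det_mul, ← mul_assoc,
    Matrix.mul_nonsing_inv _ (isUnit_iff_ne_zero.2 hx), one_mul]

lemma det_mul_interpBasis (hx : (evalMatrix e x).det ≠ 0) (b : ι) (p : X) :
    (evalMatrix e x).det * interpBasis e x b p = (evalMatrix e (Function.update x b p)).det := by
  have hupdate : evalMatrix e (Function.update x b p) = (evalMatrix e x).updateCol b (e · p) := by
    ext i j
    simp only [evalMatrix, Matrix.of_apply, Matrix.updateCol_apply, Function.update_apply]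
    split_ifs <;> rfl
  rw [hupdate, ← Matrix.cramer_apply, Matrix.cramer_eq_adjugate_mulVec,
    congrFun (interpBasis_eq_mulVec e x p) b, Matrix.inv_def, Matrix.smul_mulVec, Pi.smul_apply,
    Ring.inverse_eq_inv', smul_eq_mul, mul_inv_cancel_left₀ hx]

lemma IsFekete.norm_interpBasis_le_one (h : IsFekete e L x) (hx : (evalMatrix e x).det ≠ 0) (b : ι)
    {p : X} (hp : p ∈ L) : ‖interpBasis e x b p‖ ≤ 1 := by
  have hle := h.norm_det_le (Function.update x b p) fun i => by
    rcases eq_or_ne i b with rfl | hi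
    · simpa using hp
    · simpa [hi] using h.mem i
  rw [← det_mul_interpBasis hx, norm_mul] at hle
  exact (mul_le_iff_le_one_right (norm_pos_iff.2 hx)).1 hle

lemma IsFekete.norm_sum_mul_interpBasis_le (h : IsFekete e L x) (hx : (evalMatrix e x).det ≠ 0)
    {v : ι → ℂ} {B : ℝ} (hv : ∀ b, ‖v b‖ ≤ B) {p : X} (hp : p ∈ L) :
    ‖∑ b, v b * interpBasis e x b p‖ ≤ Fintype.card ι * B := by
  rw [← nsmul_eq_mul]
  refine (norm_sum_le _ _).trans (Finset.sum_le_card_nsmul _ _ _ fun b _ => ?_)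
  rw [norm_mul]
  exact (mul_le_of_le_one_right (norm_nonneg _) (h.norm_interpBasis_le_one hx b hp)).trans (hv b)

lemma IsFekete.norm_le_card_mul (h : IsFekete e L x) (hx : (evalMatrix e x).det ≠ 0) {f : X → ℂ}
    (hf : f ∈ Submodule.span ℂ (Set.range e)) {B : ℝ} (hB : ∀ b, ‖f (x b)‖ ≤ B) {p : X}
    (hp : p ∈ L) : ‖f p‖ ≤ Fintype.card ι * B :=
  sum_mul_interpBasis hx hf p ▸ h.norm_sum_mul_interpBasis_le hx hB hp

lemma exists_isFekete [TopologicalSpace X] (he : ∀ a, Continuous (e a)) (hL : IsCompact L)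
    (hne : L.Nonempty) : ∃ x, IsFekete e L x := by
  have hcont : Continuous fun x : ι → X => ‖(evalMatrix e x).det‖ :=
    (continuous_matrix fun i j => (he i).comp (continuous_apply j)).matrix_det.norm
  obtain ⟨x, hx, hmax⟩ := (isCompact_univ_pi fun _ : ι => hL).exists_isMaxOn
    (Set.univ_pi_nonempty_iff.2 fun _ => hne) hcont.continuousOn
  exact ⟨x, fun i => hx i trivial, fun y hy => hmax fun i _ => hy i⟩

lemma IsFekete.maxDet_eq (h : IsFekete e L x) : maxDet e L = ‖(evalMatrix e x).det‖ :=
  have hle : ∀ y : ι → L, ‖(evalMatrix e fun i => y i).det‖ ≤ ‖(evalMatrix e x).det‖ := fun y =>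
    h.norm_det_le _ fun i => (y i).2
  have : Nonempty (ι → L) := ⟨fun i => ⟨x i, h.mem i⟩⟩
  le_antisymm (ciSup_le hle)
    (le_ciSup (f := fun y : ι → L => ‖(evalMatrix e fun i => y i).det‖)
      ⟨_, Set.forall_mem_range.2 hle⟩ fun i => ⟨x i, h.mem i⟩)

lemma exists_det_evalMatrix_ne_zero (h : LinearIndependent ℂ fun a (p : L) => e a p) :
    ∃ x : ι → X, (∀ i, x i ∈ L) ∧ (evalMatrix e x).det ≠ 0 := by
  have hspan := span_flip_eq_top_iff_linearIndependent.2 h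
  obtain ⟨g, hg, -, hli⟩ := Submodule.exists_fun_fin_finrank_span_eq ℂ
    (Set.range (flip fun a (p : L) => e a p))
  have hcard : Module.finrank ℂ (Submodule.span ℂ (Set.range (flip fun a (p : L) => e a p))) =
      Fintype.card ι := by
    rw [hspan]
    simp
  let σ := Fintype.equivFinOfCardEq hcard.symm
  choose x hx using fun i => hg (σ i)
  have hcol : (evalMatrix e fun i => x i).col = g ∘ σ := funext hx
  refine ⟨fun i => x i, fun i => (x i).2, ?_⟩
  rw [← isUnit_iff_ne_zero, ← Matrix.isUnit_iff_isUnit_det,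
    ← Matrix.linearIndependent_cols_iff_isUnit, hcol]
  exact hli.comp _ σ.injective

lemma IsFekete.det_ne_zero (hx : IsFekete e L x) (h : LinearIndependent ℂ fun a (p : L) => e a p) :
    (evalMatrix e x).det ≠ 0 := by
  obtain ⟨y, hy, hy0⟩ := exists_det_evalMatrix_ne_zero h
  exact norm_pos_iff.1 ((norm_pos_iff.2 hy0).trans_le (hx.norm_det_le y hy))

lemma exists_isFekete_det_ne_zero [TopologicalSpace X] [Nonempty ι] (he : ∀ a, Continuous (e a))
    (hL : IsCompact L) (h : LinearIndependent ℂ fun a (p : L) => e a p) :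
    ∃ x, IsFekete e L x ∧ (evalMatrix e x).det ≠ 0 := by
  obtain ⟨y, hy, -⟩ := exists_det_evalMatrix_ne_zero h
  obtain ⟨x, hx⟩ := exists_isFekete he hL ⟨_, hy (Classical.arbitrary ι)⟩
  exact ⟨x, hx, hx.det_ne_zero h⟩

lemma maxDet_pos [TopologicalSpace X] [Nonempty ι] (he : ∀ a, Continuous (e a)) (hL : IsCompact L)
    (h : LinearIndependent ℂ fun a (p : L) => e a p) : 0 < maxDet e L := by
  obtain ⟨x, hx, hdet⟩ := exists_isFekete_det_ne_zero he hL h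
  exact hx.maxDet_eq ▸ norm_pos_iff.2 hdet

lemma norm_det_le_factorial_mul_prod {M : Matrix ι ι ℂ} {B : ι → ℝ} (hB : ∀ i j, ‖M i j‖ ≤ B i) :
    ‖M.det‖ ≤ (Fintype.card ι).factorial * ∏ i, B i := by
  rw [← Matrix.det_transpose, Matrix.det_apply, ← Fintype.card_perm, ← nsmul_eq_mul]
  refine (norm_sum_le _ _).trans (Finset.sum_le_card_nsmul _ _ _ fun σ _ => ?_)
  have hsign : ‖Equiv.Perm.sign σ • ∏ i, M.transpose (σ i) i‖ = ‖∏ i, M.transpose (σ i) i‖ := by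
    rcases Int.units_eq_one_or (Equiv.Perm.sign σ) with h | h <;> simp [h]
  rw [hsign, norm_prod]
  exact Finset.prod_le_prod (fun i _ => norm_nonneg _) fun i _ => hB i _

lemma norm_det_of_orthonormalBasis (U : OrthonormalBasis ι ℂ (EuclideanSpace ℂ ι)) :
    ‖(Matrix.of fun i b => U i b).det‖ = 1 := by
  rw [← (EuclideanSpace.basisFun ι ℂ).det_to_matrix_orthonormalBasis U, Module.Basis.det_apply,
    ← Matrix.det_transpose]
  rfl

lemma exists_orthonormalBasis_eval (hx : (evalMatrix e x).det ≠ 0) {W : Submodule ℂ (X → ℂ)}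
    (hW : W ≤ Submodule.span ℂ (Set.range e)) :
    ∃ (U : OrthonormalBasis ι ℂ (EuclideanSpace ℂ ι)) (s : Finset ι),
      s.card = Module.finrank ℂ W ∧ ∀ i ∈ s, ∃ f ∈ W, ∀ b, U i b = f (x b) := by
  let φ : W →ₗ[ℂ] EuclideanSpace ℂ ι :=
    (WithLp.linearEquiv 2 ℂ (ι → ℂ)).symm.toLinearMap ∘ₗ LinearMap.funLeft ℂ ℂ x ∘ₗ W.subtype
  have hφ : ∀ (f : W) b, φ f b = (f : X → ℂ) (x b) := fun f b => rfl
  have hinj : Function.Injective φ := by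
    refine (injective_iff_map_eq_zero φ).2 fun f hf => Subtype.ext (funext fun p => ?_)
    rw [← sum_mul_interpBasis hx (hW f.2) p]
    refine Finset.sum_eq_zero fun b _ => ?_
    rw [← hφ, hf, PiLp.zero_apply, zero_mul]
  obtain ⟨U, s, hs, hU⟩ := exists_orthonormalBasis_mem φ.range
  refine ⟨U, s, hs.trans (LinearMap.finrank_range_of_inj hinj), fun i hi => ?_⟩
  obtain ⟨f, hf⟩ := hU i hi
  exact ⟨f, f.2, fun b => by rw [← hf, hφ]⟩

lemma IsFekete.norm_det_interpBasis_le (h : IsFekete e L x) (hx : (evalMatrix e x).det ≠ 0)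
    (hL' : L' ⊆ L) {W : Submodule ℂ (X → ℂ)} (hW : W ≤ Submodule.span ℂ (Set.range e)) {θ : ℝ}
    (hθ : ∀ f ∈ W, ∀ B, (∀ p ∈ L, ‖f p‖ ≤ B) → ∀ p ∈ L', ‖f p‖ ≤ θ * B)
    (hy : ∀ i, y i ∈ L') :
    ‖(Matrix.of fun b j => interpBasis e x b (y j)).det‖ ≤
      (Fintype.card ι).factorial * (Fintype.card ι ^ Fintype.card ι * θ ^ Module.finrank ℂ W) := by
  obtain ⟨U, s, hs, hU⟩ := exists_orthonormalBasis_eval hx hW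
  have hUle : ∀ i b, ‖U i b‖ ≤ 1 := fun i b =>
    (PiLp.norm_apply_le (U i) b).trans_eq (U.orthonormal.1 i)
  have hL : ∀ i, ∀ p ∈ L, ‖∑ b, U i b * interpBasis e x b p‖ ≤ Fintype.card ι := fun i p hp => by
    simpa using h.norm_sum_mul_interpBasis_le hx (hUle i) hp
  have hs' : ∀ i ∈ s, ∀ p ∈ L', ‖∑ b, U i b * interpBasis e x b p‖ ≤ Fintype.card ι * θ := by
    intro i hi p hp
    obtain ⟨f, hf, hUf⟩ := hU i hi
    have hsum : ∀ q, ∑ b, U i b * interpBasis e x b q = f q := fun q => by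
      simp_rw [hUf, sum_mul_interpBasis hx (hW hf)]
    rw [hsum, mul_comm]
    exact hθ f hf _ (fun q hq => hsum q ▸ hL i q hq) p hp
  calc ‖(Matrix.of fun b j => interpBasis e x b (y j)).det‖
      = ‖((Matrix.of fun i b => U i b) * Matrix.of fun b j => interpBasis e x b (y j)).det‖ := by
        rw [Matrix.det_mul, norm_mul, norm_det_of_orthonormalBasis, one_mul]
    _ ≤ (Fintype.card ι).factorial * ∏ i, Fintype.card ι * if i ∈ s then θ else 1 := by
        refine norm_det_le_factorial_mul_prod fun i j => ?_
        rw [Matrix.mul_apply]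
        split_ifs with hi
        · exact hs' i hi _ (hy j)
        · simpa using hL i _ (hL' (hy j))
    _ = _ := by
        rw [Finset.prod_mul_distrib, Finset.prod_const, Finset.card_univ, Finset.prod_ite_mem,
          Finset.univ_inter, Finset.prod_const, hs]

lemma IsFekete.maxDet_le_mul_maxDet (h : IsFekete e L x) (hx : (evalMatrix e x).det ≠ 0)
    {B : ℝ} (hB : ∀ y : ι → X, (∀ i, y i ∈ L') →
      ‖(Matrix.of fun b j => interpBasis e x b (y j)).det‖ ≤ B) (hB0 : 0 ≤ B) :
    maxDet e L' ≤ B * maxDet e L := by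
  rw [h.maxDet_eq]
  refine Real.iSup_le (fun y => ?_) (by positivity)
  rw [det_evalMatrix_eq_mul hx, norm_mul, mul_comm]
  exact mul_le_mul_of_nonneg_right (hB _ fun i => (y i).2) (norm_nonneg _)

lemma finrank_map_mulLeft_span (hx : (evalMatrix e x).det ≠ 0) {F : X → ℂ}
    (hF : ∀ b, F (x b) ≠ 0) :
    Module.finrank ℂ ((Submodule.span ℂ (Set.range e)).map (LinearMap.mulLeft ℂ F)) =
      Fintype.card ι := by
  have hli : LinearIndependent ℂ fun a => F * e a := by
    refine Fintype.linearIndependent_iff.2 fun c hc => congrFun ?_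
    refine Matrix.eq_zero_of_vecMul_eq_zero hx (funext fun b => ?_)
    have hb : F (x b) * ∑ a, c a * e a (x b) = 0 := by
      rw [Finset.mul_sum]
      simpa [mul_left_comm] using congrFun hc (x b)
    simpa [Matrix.vecMul, dotProduct, evalMatrix] using (mul_eq_zero.1 hb).resolve_left (hF b)
  rw [Submodule.map_span, ← Set.range_comp]
  exact finrank_span_eq_card hli

end Fekete

/-! ### Polynomials of bounded bidegree -/

section BiDegree

/-- The monomials of degree at most `d` in each variable, as functions. -/
def biMonomial (d : ℕ) (a : Fin (d + 1) × Fin (d + 1)) (p : ℂ × ℂ) : ℂ :=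
  p.1 ^ (a.1 : ℕ) * p.2 ^ (a.2 : ℕ)

/-- The space of polynomial functions of degree at most `d` in each variable. -/
def biDegreeLE (d : ℕ) : Submodule ℂ (ℂ × ℂ → ℂ) := Submodule.span ℂ (Set.range (biMonomial d))

lemma continuous_biMonomial (d : ℕ) (a : Fin (d + 1) × Fin (d + 1)) :
    Continuous (biMonomial d a) := by
  unfold biMonomial
  fun_prop

variable {d n : ℕ} {f g : ℂ × ℂ → ℂ}

lemma pow_mul_pow_mem_biDegreeLE {i j : ℕ} (hi : i ≤ d) (hj : j ≤ d) :
    (fun p : ℂ × ℂ => p.1 ^ i * p.2 ^ j) ∈ biDegreeLE d :=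
  Submodule.subset_span ⟨(⟨i, Nat.lt_succ_of_le hi⟩, ⟨j, Nat.lt_succ_of_le hj⟩), rfl⟩

lemma mul_mem_biDegreeLE (hf : f ∈ biDegreeLE d) (hg : g ∈ biDegreeLE n) :
    f * g ∈ biDegreeLE (d + n) := by
  have h := Submodule.mul_mem_mul hf hg
  rw [biDegreeLE, biDegreeLE, Submodule.span_mul_span] at h
  refine Submodule.span_le.2 ?_ h
  rintro _ ⟨_, ⟨a, rfl⟩, _, ⟨b, rfl⟩, rfl⟩
  have hmul : biMonomial d a * biMonomial n b =
      fun p => p.1 ^ (a.1 + b.1 : ℕ) * p.2 ^ (a.2 + b.2 : ℕ) := by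
    ext p
    simp only [biMonomial, Pi.mul_apply]
    ring
  have hmem := pow_mul_pow_mem_biDegreeLE (add_le_add a.1.is_le b.1.is_le)
    (add_le_add a.2.is_le b.2.is_le)
  rwa [← hmul] at hmem

lemma pow_mem_biDegreeLE (hf : f ∈ biDegreeLE d) (m : ℕ) : f ^ m ∈ biDegreeLE (m * d) := by
  induction m with
  | zero =>
    simpa [Pi.one_def] using
      pow_mul_pow_mem_biDegreeLE (d := 0 * d) (Nat.zero_le _) (Nat.zero_le _)
  | succ m ih =>
    rw [pow_succ, Nat.succ_mul]
    exact mul_mem_biDegreeLE ih hf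

lemma eval_mul_pow_mem_biDegreeLE {P : Polynomial ℂ} (hP : P.natDegree ≤ d) {j : ℕ} (hj : j ≤ d) :
    (fun p : ℂ × ℂ => P.eval p.1 * p.2 ^ j) ∈ biDegreeLE d := by
  have hsum : (fun p : ℂ × ℂ => P.eval p.1 * p.2 ^ j) =
      ∑ i ∈ Finset.range (d + 1), P.coeff i • fun p : ℂ × ℂ => p.1 ^ i * p.2 ^ j := by
    ext p
    rw [Polynomial.eval_eq_sum_range' (Nat.lt_succ_of_le hP)]
    simp [Finset.sum_mul, mul_assoc]
  rw [hsum]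
  exact Submodule.sum_mem _ fun i hi => Submodule.smul_mem _ _
    (pow_mul_pow_mem_biDegreeLE (Finset.mem_range_succ_iff.1 hi) hj)

lemma eval_mul_sub_eval_mem_biDegreeLE {P Q : Polynomial ℂ} (hP : P.natDegree ≤ d)
    (hQ : Q.natDegree ≤ d) (hd : d ≠ 0) :
    (fun p : ℂ × ℂ => Q.eval p.1 * p.2 - P.eval p.1) ∈ biDegreeLE d := by
  simpa [Pi.sub_def] using Submodule.sub_mem _
    (eval_mul_pow_mem_biDegreeLE hQ (Nat.one_le_iff_ne_zero.2 hd))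
    (eval_mul_pow_mem_biDegreeLE hP (Nat.zero_le d))

lemma sum_smul_pow_mem_biDegreeLE {κ : Type*} {A : Finset κ} {m : κ → ℕ} {g : κ → ℂ × ℂ → ℂ}
    (hg : ∀ k ∈ A, g k ∈ biDegreeLE (m k)) (hd : ∀ k ∈ A, m k ∣ d) (c : κ → ℂ) :
    (fun p => ∑ k ∈ A, c k * g k p ^ (d / m k)) ∈ biDegreeLE d := by
  have hsum : (fun p => ∑ k ∈ A, c k * g k p ^ (d / m k)) = ∑ k ∈ A, c k • g k ^ (d / m k) := by
    ext p
    simp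
  rw [hsum]
  refine Submodule.sum_mem _ fun k hk => Submodule.smul_mem _ _ ?_
  simpa [Nat.div_mul_cancel (hd k hk)] using pow_mem_biDegreeLE (hg k hk) (d / m k)

lemma differentiable_of_mem_biDegreeLE (hf : f ∈ biDegreeLE d) (z : ℂ) :
    Differentiable ℂ fun w => f (z, w) := by
  obtain ⟨c, rfl⟩ := (Submodule.mem_span_range_iff_exists_fun ℂ).1 hf
  simp only [Finset.sum_apply, Pi.smul_apply, biMonomial, smul_eq_mul]
  fun_prop

lemma norm_biMonomial_le {R : ℝ} (hR : 1 ≤ R) {p : ℂ × ℂ} (hp : ‖p‖ ≤ R)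
    (a : Fin (d + 1) × Fin (d + 1)) : ‖biMonomial d a p‖ ≤ R ^ (2 * d) := by
  have hpow : ∀ (i : Fin (d + 1)) (z : ℂ), ‖z‖ ≤ R → ‖z‖ ^ (i : ℕ) ≤ R ^ d := fun i z hz =>
    (pow_le_pow_left₀ (norm_nonneg _) hz _).trans (pow_le_pow_right₀ hR i.is_le)
  rw [biMonomial, norm_mul, norm_pow, norm_pow, two_mul, pow_add]
  exact mul_le_mul (hpow _ _ ((norm_fst_le p).trans hp)) (hpow _ _ ((norm_snd_le p).trans hp))
    (by positivity) (by positivity)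

lemma exists_isNormalizedBiPoly_of_coeff {c : Fin (d + 1) × Fin (d + 1) → ℂ}
    (hc : ∀ a, ‖c a‖ ≤ 1) {a : Fin (d + 1) × Fin (d + 1)} (ha : ‖c a‖ = 1) :
    ∃ P, IsNormalizedBiPoly d P ∧
      ∀ p : ℂ × ℂ, P.evalEval p.1 p.2 = ∑ a, c a * biMonomial d a p := by
  let P : Polynomial (Polynomial ℂ) :=
    ∑ a, Polynomial.monomial (a.2 : ℕ) (Polynomial.monomial (a.1 : ℕ) (c a))
  have hcoeff : ∀ i j, (P.coeff j).coeff i =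
      if h : i < d + 1 ∧ j < d + 1 then c (⟨i, h.1⟩, ⟨j, h.2⟩) else 0 := by
    intro i j
    have hterm : ∀ a : Fin (d + 1) × Fin (d + 1),
        ((Polynomial.monomial (a.2 : ℕ) (Polynomial.monomial (a.1 : ℕ) (c a))).coeff j).coeff i =
          if (a.1 : ℕ) = i ∧ (a.2 : ℕ) = j then c a else 0 := fun a => by
      by_cases h : (a.2 : ℕ) = j <;> simp [Polynomial.coeff_monomial, h]
    simp only [P, Polynomial.finsetSum_coeff, hterm]
    split_ifs with h
    · rw [Finset.sum_eq_single (⟨i, h.1⟩, ⟨j, h.2⟩)]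
      · simp
      · rintro a - hne
        rw [if_neg]
        rintro ⟨rfl, rfl⟩
        exact hne rfl
      · simp
    · refine Finset.sum_eq_zero fun a _ => if_neg ?_
      rintro ⟨rfl, rfl⟩
      exact h ⟨a.1.2, a.2.2⟩
  refine ⟨P, ⟨?_, fun j => ?_, fun j i => ?_, a.2, a.1, ?_⟩, fun p => ?_⟩
  · exact Polynomial.natDegree_sum_le_of_forall_le _ _ fun a _ =>
      (Polynomial.natDegree_monomial_le _).trans a.2.is_le
  · refine Polynomial.natDegree_le_iff_coeff_eq_zero.2 fun i hi => ?_
    rw [hcoeff, dif_neg (by lia)]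
  · rw [hcoeff]
    split_ifs
    · exact hc _
    · simp
  · rw [hcoeff, dif_pos ⟨a.1.2, a.2.2⟩]
    exact ha
  · simp [P, Polynomial.evalEval_finsetSum, biMonomial, Polynomial.evalEval, mul_assoc]

/-- Normalizing by the largest coefficient turns a lower bound for normalized polynomials into a
bound for the coefficients. -/
lemma mul_norm_coeff_le {K : Set (ℂ × ℂ)} (hK : K.Nonempty) {δ B : ℝ}
    (hδ : ∀ P, IsNormalizedBiPoly d P → ∃ p ∈ K, δ ≤ ‖P.evalEval p.1 p.2‖)
    {c : Fin (d + 1) × Fin (d + 1) → ℂ} (hB : ∀ p ∈ K, ‖∑ a, c a * biMonomial d a p‖ ≤ B)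
    (hδ0 : 0 ≤ δ) (a : Fin (d + 1) × Fin (d + 1)) : δ * ‖c a‖ ≤ B := by
  obtain ⟨m, -, hm⟩ := Finset.exists_max_image Finset.univ (‖c ·‖) ⟨a, Finset.mem_univ a⟩
  refine (mul_le_mul_of_nonneg_left (hm a (Finset.mem_univ a)) hδ0).trans ?_
  rcases eq_or_ne (c m) 0 with h0 | h0
  · obtain ⟨p, hp⟩ := hK
    simpa [h0] using (norm_nonneg _).trans (hB p hp)
  have hpos := norm_pos_iff.2 h0
  obtain ⟨P, hP, heval⟩ := exists_isNormalizedBiPoly_of_coeff (c := fun a => c a / c m)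
    (fun a => by
      rw [norm_div]
      exact div_le_one_of_le₀ (hm a (Finset.mem_univ a)) hpos.le)
    (a := m) (by rw [div_self h0, norm_one])
  obtain ⟨p, hp, hle⟩ := hδ P hP
  simp_rw [heval, div_mul_eq_mul_div, ← Finset.sum_div, norm_div, le_div_iff₀ hpos] at hle
  exact hle.trans (hB p hp)

lemma linearIndependent_biMonomial {K : Set (ℂ × ℂ)} (hK : K.Nonempty) {δ : ℝ}
    (hδ : ∀ P, IsNormalizedBiPoly d P → ∃ p ∈ K, δ ≤ ‖P.evalEval p.1 p.2‖) (hδ0 : 0 < δ) :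
    LinearIndependent ℂ fun a (p : K) => biMonomial d a p := by
  refine Fintype.linearIndependent_iff.2 fun c hc a => norm_le_zero_iff.1 ?_
  refine nonpos_of_mul_nonpos_right (mul_norm_coeff_le hK hδ (fun p hp => ?_) hδ0.le a) hδ0
  simpa using congrFun hc ⟨p, hp⟩

end BiDegree

section FiberThickening

open scoped Pointwise

/-- The closed `η`-thickening of `K` in the second variable. -/
def fiberThickening (K : Set (ℂ × ℂ)) (η : ℝ) : Set (ℂ × ℂ) := K + {0} ×ˢ closedBall 0 η

/-- The union of the circles of radius `η`, in the second variable, around the points of `K`. -/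
def fiberSphere (K : Set (ℂ × ℂ)) (η : ℝ) : Set (ℂ × ℂ) := K + {0} ×ˢ sphere 0 η

variable {K : Set (ℂ × ℂ)} {η η' : ℝ}

lemma mem_fiberThickening {p : ℂ × ℂ} :
    p ∈ fiberThickening K η ↔ ∃ w, (p.1, w) ∈ K ∧ ‖p.2 - w‖ ≤ η := by
  constructor
  · rintro ⟨q, hq, ⟨_, v⟩, ⟨rfl, hv⟩, rfl⟩
    exact ⟨q.2, by simpa using hq, by simpa using hv⟩
  · rintro ⟨w, hw, hη⟩
    exact ⟨_, hw, (0, p.2 - w), ⟨rfl, by simpa using hη⟩, by simp⟩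

lemma mem_fiberSphere {p : ℂ × ℂ} :
    p ∈ fiberSphere K η ↔ ∃ w, (p.1, w) ∈ K ∧ ‖p.2 - w‖ = η := by
  constructor
  · rintro ⟨q, hq, ⟨_, v⟩, ⟨rfl, hv⟩, rfl⟩
    exact ⟨q.2, by simpa using hq, by simpa using hv⟩
  · rintro ⟨w, hw, hη⟩
    exact ⟨_, hw, (0, p.2 - w), ⟨rfl, by simpa using hη⟩, by simp⟩

lemma isCompact_fiberThickening (hK : IsCompact K) (η : ℝ) : IsCompact (fiberThickening K η) :=
  hK.add (isCompact_singleton.prod (isCompact_closedBall 0 η))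

lemma isCompact_fiberSphere (hK : IsCompact K) (η : ℝ) : IsCompact (fiberSphere K η) :=
  hK.add (isCompact_singleton.prod (isCompact_sphere 0 η))

lemma fiberSphere_subset_fiberThickening : fiberSphere K η ⊆ fiberThickening K η :=
  Set.add_subset_add_left (Set.prod_mono le_rfl sphere_subset_closedBall)

lemma fiberThickening_mono (h : η' ≤ η) : fiberThickening K η' ⊆ fiberThickening K η :=
  Set.add_subset_add_left (Set.prod_mono le_rfl (closedBall_subset_closedBall h))

lemma subset_fiberThickening (h : 0 ≤ η) : K ⊆ fiberThickening K η := fun p hp =>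
  mem_fiberThickening.2 ⟨p.2, hp, by simpa using h⟩

lemma norm_le_of_forall_fiberSphere_norm_le (hη : 0 < η) {f : ℂ × ℂ → ℂ}
    (hf : ∀ z, Differentiable ℂ fun w => f (z, w)) {B : ℝ}
    (hB : ∀ p ∈ fiberSphere K η, ‖f p‖ ≤ B) {p : ℂ × ℂ} (hp : p ∈ fiberThickening K η) :
    ‖f p‖ ≤ B := by
  obtain ⟨w, hw, hdist⟩ := mem_fiberThickening.1 hp
  refine Complex.norm_le_of_forall_mem_frontier_norm_le (f := fun v => f (p.1, v)) (U := ball w η)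
    isBounded_ball (hf p.1).diffContOnCl (fun v hv => ?_) ?_
  · rw [frontier_ball _ hη.ne', mem_sphere_iff_norm] at hv
    exact hB _ (mem_fiberSphere.2 ⟨w, hw, hv⟩)
  · rwa [closure_ball _ hη.ne', mem_closedBall_iff_norm]

end FiberThickening

/-! ### Decay of Fekete determinants -/

section DeterminantDecay

/-- The dimension of `biDegreeLE d`, that is, the number of monomials `biMonomial d`. -/
def biDim (d : ℕ) : ℕ := (d + 1) ^ 2

lemma card_eq_biDim (d : ℕ) : Fintype.card (Fin (d + 1) × Fin (d + 1)) = biDim d := by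
  simp [biDim, sq]

variable {K L : Set (ℂ × ℂ)} {d : ℕ} {η η' : ℝ}

lemma linearIndependent_biMonomial_mono (hKL : K ⊆ L)
    (h : LinearIndependent ℂ fun a (p : K) => biMonomial d a p) :
    LinearIndependent ℂ fun a (p : L) => biMonomial d a p :=
  LinearIndependent.of_comp (LinearMap.funLeft ℂ ℂ (Set.inclusion hKL)) h

lemma linearIndependent_biMonomial_fiberSphere (hη : 0 < η)
    (h : LinearIndependent ℂ fun a (p : K) => biMonomial d a p) :
    LinearIndependent ℂ fun a (p : fiberSphere K η) => biMonomial d a p := by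
  refine Fintype.linearIndependent_iff.2 fun c hc =>
    Fintype.linearIndependent_iff.1 h c (funext fun p => ?_)
  have hmem : ∑ a, c a • biMonomial d a ∈ biDegreeLE d :=
    Submodule.sum_mem _ fun a _ => Submodule.smul_mem _ _ (Submodule.subset_span ⟨a, rfl⟩)
  have hzero := norm_le_of_forall_fiberSphere_norm_le hη (differentiable_of_mem_biDegreeLE hmem)
    (B := 0) (fun q hq => by simpa using congrFun hc ⟨q, hq⟩) (subset_fiberThickening hη.le p.2)
  simpa using hzero

lemma norm_le_of_isFekete_fiberSphere (hη : 0 < η)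
    {x : Fin (d + 1) × Fin (d + 1) → ℂ × ℂ} (hx : IsFekete (biMonomial d) (fiberSphere K η) x)
    (hdet : (evalMatrix (biMonomial d) x).det ≠ 0) {F f : ℂ × ℂ → ℂ} (hf : f ∈ biDegreeLE d)
    {m B : ℝ} (hm : 0 < m) (hF : ∀ b, m ≤ ‖F (x b)‖)
    (hB : ∀ p ∈ fiberSphere K η, ‖F p * f p‖ ≤ B) {p : ℂ × ℂ} (hp : p ∈ fiberThickening K η) :
    ‖f p‖ ≤ biDim d * (B / m) := by
  refine norm_le_of_forall_fiberSphere_norm_le hη (differentiable_of_mem_biDegreeLE hf)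
    (fun q hq => ?_) hp
  rw [← card_eq_biDim]
  refine hx.norm_le_card_mul hdet hf (fun b => ?_) hq
  rw [le_div_iff₀' hm]
  calc m * ‖f (x b)‖ ≤ ‖F (x b)‖ * ‖f (x b)‖ := by gcongr; exact hF b
    _ ≤ B := norm_mul (F (x b)) _ ▸ hB _ (hx.mem b)

/-- The functions `F * f` with `f` of degree at most `d` span a subspace of dimension `biDim d`, a
fixed proportion of `biDim (2 * d)`, on which passing to the thinner set gains a factor. -/
lemma maxDet_fiberThickening_le_of_isFekete (hK : IsCompact K) (hη : 0 < η) (hη' : η' ≤ η)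
    (hli : LinearIndependent ℂ fun a (p : K) => biMonomial (2 * d) a p)
    {x : Fin (d + 1) × Fin (d + 1) → ℂ × ℂ} (hx : IsFekete (biMonomial d) (fiberSphere K η) x)
    (hdet : (evalMatrix (biMonomial d) x).det ≠ 0) {F : ℂ × ℂ → ℂ} (hF : F ∈ biDegreeLE d)
    {m M : ℝ} (hm : 0 < m) (hmF : ∀ b, m ≤ ‖F (x b)‖) (hM : 0 ≤ M)
    (hFM : ∀ p ∈ fiberThickening K η', ‖F p‖ ≤ M) :
    maxDet (biMonomial (2 * d)) (fiberThickening K η') ≤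
      (biDim (2 * d)).factorial * (biDim (2 * d) ^ biDim (2 * d) *
        (M * biDim d / m) ^ biDim d) * maxDet (biMonomial (2 * d)) (fiberThickening K η) := by
  have hF0 : ∀ b, F (x b) ≠ 0 := fun b => norm_pos_iff.1 (hm.trans_le (hmF b))
  obtain ⟨z, hz, hzdet⟩ := exists_isFekete_det_ne_zero (continuous_biMonomial (2 * d))
    (isCompact_fiberThickening hK η)
    (linearIndependent_biMonomial_mono (subset_fiberThickening hη.le) hli)
  have hW : (biDegreeLE d).map (LinearMap.mulLeft ℂ F) ≤ biDegreeLE (2 * d) := by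
    rintro _ ⟨f, hf, rfl⟩
    exact two_mul d ▸ mul_mem_biDegreeLE hF hf
  have hθ : ∀ f ∈ (biDegreeLE d).map (LinearMap.mulLeft ℂ F), ∀ B,
      (∀ p ∈ fiberThickening K η, ‖f p‖ ≤ B) →
        ∀ p ∈ fiberThickening K η', ‖f p‖ ≤ M * biDim d / m * B := by
    rintro _ ⟨f, hf, rfl⟩ B hB p hp
    calc ‖F p * f p‖ ≤ M * (biDim d * (B / m)) := by
          rw [norm_mul]
          gcongr
          · exact hFM p hp
          · exact norm_le_of_isFekete_fiberSphere hη hx hdet hf hm hmF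
              (fun q hq => hB q (fiberSphere_subset_fiberThickening hq))
              (fiberThickening_mono hη' hp)
      _ = M * biDim d / m * B := by ring
  refine hz.maxDet_le_mul_maxDet hzdet (fun y hy => ?_) (by positivity)
  have hbound := hz.norm_det_interpBasis_le hzdet (fiberThickening_mono hη') hW hθ hy
  rwa [biDegreeLE, finrank_map_mulLeft_span hdet hF0, card_eq_biDim, card_eq_biDim] at hbound

lemma maxDet_fiberThickening_le (hK : IsCompact K) (hη : 0 < η) (hη' : η' ≤ η)
    (hd : LinearIndependent ℂ fun a (p : K) => biMonomial d a p)
    (h2d : LinearIndependent ℂ fun a (p : K) => biMonomial (2 * d) a p)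
    {κ : Type*} {A : Finset κ} {n : κ → ℕ} {g : κ → ℂ × ℂ → ℂ} (hn : ∀ k ∈ A, n k ≠ 0)
    (hdvd : ∀ k ∈ A, n k ∣ d) (hg : ∀ k ∈ A, g k ∈ biDegreeLE (n k)) {s t : ℝ}
    (hs : ∀ p ∈ fiberSphere K η, ∃ k ∈ A, Real.exp (s * n k) ≤ ‖g k p‖)
    (ht : ∀ k ∈ A, ∀ p ∈ fiberThickening K η', ‖g k p‖ ≤ Real.exp (t * n k)) :
    maxDet (biMonomial (2 * d)) (fiberThickening K η') ≤
      (biDim (2 * d)).factorial * (biDim (2 * d) ^ biDim (2 * d) *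
        (A.card * biDim d * (4 * biDim d) ^ A.card * Real.exp ((t - s) * d)) ^ biDim d) *
        maxDet (biMonomial (2 * d)) (fiberThickening K η) := by
  obtain ⟨x, hx, hdet⟩ := exists_isFekete_det_ne_zero (continuous_biMonomial d)
    (isCompact_fiberSphere hK η) (linearIndependent_biMonomial_fiberSphere hη hd)
  obtain ⟨c, hc, hlow⟩ := exists_exp_le_mul_norm_sum_mul_pow A Finset.univ hn hdvd
    (fun k b => g k (x b)) s
  rw [Finset.card_univ, card_eq_biDim] at hlow
  have hdim : (0 : ℝ) < biDim d := by
    rw [biDim]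
    positivity
  have hθ : A.card * Real.exp (t * d) * biDim d / (Real.exp (s * d) / (4 * biDim d) ^ A.card) =
      A.card * biDim d * (4 * biDim d) ^ A.card * Real.exp ((t - s) * d) := by
    rw [sub_mul, Real.exp_sub]
    field_simp
  rw [← hθ]
  refine maxDet_fiberThickening_le_of_isFekete hK hη hη' h2d hx hdet
    (sum_smul_pow_mem_biDegreeLE hg hdvd c) (by positivity) (fun b => ?_) (by positivity)
    fun p hp => norm_sum_mul_pow_le hc hn hdvd fun k hk => ht k hk p hp
  rw [div_le_iff₀' (by positivity)]
  exact hlow b (Finset.mem_univ b) (hs _ (hx.mem b))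

lemma eventually_mul_pow_le_exp (c : ℝ) (m : ℕ) {τ : ℝ} (hτ : 0 < τ) :
    ∀ᶠ d : ℕ in atTop, c * ((d : ℝ) + 1) ^ m ≤ Real.exp (τ * d) := by
  have hlim : Tendsto (fun d : ℕ => (d : ℝ) + 1) atTop atTop :=
    tendsto_atTop_add_const_right _ _ tendsto_natCast_atTop_atTop
  have ho := ((isLittleO_pow_exp_pos_mul_atTop m hτ).const_mul_left (c * Real.exp τ)).comp_tendsto
    hlim
  filter_upwards [ho.bound one_pos] with d hd
  have hle := (le_abs_self _).trans hd
  simp only [Function.comp_apply, one_mul, Real.norm_of_nonneg (Real.exp_pos _).le] at hle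
  rw [mul_add, mul_one, Real.exp_add, mul_right_comm] at hle
  exact le_of_mul_le_mul_right hle (Real.exp_pos τ)

lemma biDim_two_mul_le (d : ℕ) : biDim (2 * d) ≤ 4 * biDim d := by
  rw [biDim, biDim, show 4 * (d + 1) ^ 2 = (2 * d + 2) ^ 2 by ring]
  gcongr
  exact one_le_two

lemma eventually_factorial_biDim_mul_le {τ : ℝ} (hτ : 0 < τ) : ∀ᶠ d : ℕ in atTop,
    ((biDim (2 * d)).factorial : ℝ) * biDim (2 * d) ^ biDim (2 * d) ≤
      Real.exp (τ * d) ^ biDim (2 * d) := by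
  filter_upwards [eventually_mul_pow_le_exp 16 4 hτ] with d hd
  have hdim : (biDim (2 * d) : ℝ) ^ 2 ≤ Real.exp (τ * d) := by
    refine le_trans ?_ hd
    have hle : (biDim (2 * d) : ℝ) ≤ 4 * biDim d := by exact_mod_cast biDim_two_mul_le d
    calc (biDim (2 * d) : ℝ) ^ 2 ≤ (4 * biDim d) ^ 2 := by gcongr
      _ = 16 * ((d : ℝ) + 1) ^ 4 := by
        rw [biDim]
        push_cast
        ring
  calc ((biDim (2 * d)).factorial : ℝ) * biDim (2 * d) ^ biDim (2 * d)
      ≤ biDim (2 * d) ^ biDim (2 * d) * biDim (2 * d) ^ biDim (2 * d) := by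
        gcongr
        exact_mod_cast Nat.factorial_le_pow _
    _ = ((biDim (2 * d) : ℝ) ^ 2) ^ biDim (2 * d) := by rw [← mul_pow, sq]
    _ ≤ Real.exp (τ * d) ^ biDim (2 * d) := by gcongr

lemma eventually_decay_factor_le (A : ℕ) {τ : ℝ} (hτ : 0 < τ) : ∀ᶠ d : ℕ in atTop,
    ((biDim (2 * d)).factorial : ℝ) * (biDim (2 * d) ^ biDim (2 * d) *
      (A * biDim d * (4 * biDim d) ^ A * Real.exp (-(2 * τ) * d)) ^ biDim d) ≤
      Real.exp (-(τ / 8) * d) ^ biDim (2 * d) := by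
  filter_upwards [eventually_mul_pow_le_exp (A * 4 ^ A) (2 + 2 * A) hτ,
    eventually_factorial_biDim_mul_le (τ := τ / 8) (by positivity)] with d hpow hfac
  have hθ : A * (biDim d : ℝ) * (4 * biDim d) ^ A * Real.exp (-(2 * τ) * d) ≤
      Real.exp (-τ * d) :=
    calc A * (biDim d : ℝ) * (4 * biDim d) ^ A * Real.exp (-(2 * τ) * d)
        = A * 4 ^ A * ((d : ℝ) + 1) ^ (2 + 2 * A) * Real.exp (-(2 * τ) * d) := by
          rw [biDim]
          push_cast
          rw [mul_pow, ← pow_mul, pow_add]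
          ring
      _ ≤ Real.exp (τ * d) * Real.exp (-(2 * τ) * d) := by gcongr
      _ = Real.exp (-τ * d) := by
          rw [← Real.exp_add]
          ring_nf
  have hdim : (biDim (2 * d) : ℝ) ≤ 4 * biDim d := by exact_mod_cast biDim_two_mul_le d
  calc _ ≤ Real.exp (τ / 8 * d) ^ biDim (2 * d) * Real.exp (-τ * d) ^ biDim d := by
        rw [← mul_assoc]
        gcongr
    _ ≤ Real.exp (-(τ / 8) * d) ^ biDim (2 * d) := by
        simp only [← Real.exp_nat_mul, ← Real.exp_add]
        refine Real.exp_le_exp.2 ?_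
        have hpos : 0 ≤ τ * d := by positivity
        nlinarith

end DeterminantDecay

section RationalApproximants

variable {κ : Type*} {P Q : κ → Polynomial ℂ} {n : κ → ℕ} {K : Set (ℂ × ℂ)} {η s t : ℝ}

lemma exists_finset_exp_le_norm_on_fiberSphere (hK : IsCompact K) (hη : 0 < η)
    (ht : ∀ k, ∀ p ∈ K, ‖(Q k).eval p.1 * p.2 - (P k).eval p.1‖ ≤ Real.exp (t * n k))
    (hs : ∀ p ∈ K, ∀ N : ℕ, ∃ k, N ≤ n k ∧ Real.exp (s * n k) < ‖(Q k).eval p.1‖)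
    {s' : ℝ} (hts : t ≤ s') (hss : s' < s) :
    ∃ A : Finset κ, ∀ p ∈ fiberSphere K η, ∃ k ∈ A,
      Real.exp (s' * n k) ≤ ‖(Q k).eval p.1 * p.2 - (P k).eval p.1‖ := by
  obtain ⟨N, hN⟩ := ((tendsto_exp_mul_natCast_atTop (sub_pos.2 hss)).eventually_ge_atTop
    (2 / η)).exists_forall_of_atTop
  obtain ⟨A, hA⟩ := hK.elim_finite_subcover
    (fun k => {p : ℂ × ℂ | N ≤ n k ∧ Real.exp (s * n k) < ‖(Q k).eval p.1‖})
    (fun k => isOpen_const.inter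
      (isOpen_lt continuous_const ((Q k).continuous.comp continuous_fst).norm))
    (fun p hp => Set.mem_iUnion.2 (hs p hp N))
  refine ⟨A, fun p hp => ?_⟩
  obtain ⟨w, hw, hdist⟩ := mem_fiberSphere.1 hp
  obtain ⟨k, hk, hNk, hQ⟩ := Set.mem_iUnion₂.1 (hA hw)
  refine ⟨k, hk, ?_⟩
  have hgap : 2 ≤ Real.exp ((s - s') * n k) * η := (div_le_iff₀ hη).1 (hN _ hNk)
  calc Real.exp (s' * n k)
      ≤ Real.exp (s' * n k) * (Real.exp ((s - s') * n k) * η) - Real.exp (s' * n k) := by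
        nlinarith [Real.exp_pos (s' * n k)]
    _ = Real.exp (s * n k) * η - Real.exp (s' * n k) := by
        rw [← mul_assoc, ← Real.exp_add]
        ring_nf
    _ ≤ ‖(Q k).eval p.1 * (p.2 - w)‖ - ‖(P k).eval p.1 - (Q k).eval p.1 * w‖ := by
        rw [norm_mul, hdist, norm_sub_rev ((P k).eval p.1)]
        gcongr
        exact (ht k _ hw).trans (by gcongr)
    _ ≤ ‖(Q k).eval p.1 * p.2 - (P k).eval p.1‖ := by
        refine (norm_sub_norm_le _ _).trans_eq ?_
        ring_nf

lemma exists_forall_norm_le_on_fiberThickening (hK : IsCompact K) (hη : 0 < η)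
    (hn : ∀ k, n k ≠ 0)
    (ht : ∀ k, ∀ p ∈ K, ‖(Q k).eval p.1 * p.2 - (P k).eval p.1‖ ≤ Real.exp (t * n k))
    {t' : ℝ} (htt : t < t') (A : Finset κ) :
    ∃ η' > 0, η' ≤ η ∧ ∀ k ∈ A, ∀ p ∈ fiberThickening K η',
      ‖(Q k).eval p.1 * p.2 - (P k).eval p.1‖ ≤ Real.exp (t' * n k) := by
  have hev : ∀ k ∈ A, ∀ᶠ δ in nhdsWithin (0 : ℝ) (Set.Ioi 0), ∀ p ∈ fiberThickening K δ,
      ‖(Q k).eval p.1 * p.2 - (P k).eval p.1‖ ≤ Real.exp (t' * n k) := by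
    intro k _
    obtain ⟨B, hB⟩ := hK.exists_bound_of_continuousOn (f := fun p : ℂ × ℂ => (Q k).eval p.1)
      ((Q k).continuous.comp continuous_fst).continuousOn
    have hgap : B * 0 < Real.exp (t' * n k) - Real.exp (t * n k) := by
      have hpos := Nat.pos_of_ne_zero (hn k)
      rw [mul_zero, sub_pos]
      gcongr
    have hlim := ((continuous_const_mul B).tendsto 0).mono_left
      (nhdsWithin_le_nhds (s := Set.Ioi 0))
    filter_upwards [hlim.eventually_lt_const hgap] with δ hδ p hp
    obtain ⟨w, hw, hdist⟩ := mem_fiberThickening.1 hp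
    calc ‖(Q k).eval p.1 * p.2 - (P k).eval p.1‖
        = ‖(Q k).eval p.1 * (p.2 - w) + ((Q k).eval p.1 * w - (P k).eval p.1)‖ := by ring_nf
      _ ≤ B * δ + Real.exp (t * n k) := by
        refine (norm_add_le _ _).trans (add_le_add ?_ (ht k _ hw))
        rw [norm_mul]
        exact mul_le_mul (hB (p.1, w) hw) hdist (norm_nonneg _)
          ((norm_nonneg _).trans (hB (p.1, w) hw))
      _ ≤ Real.exp (t' * n k) := (lt_sub_iff_add_lt.1 hδ).le
  obtain ⟨δ, hδ, hδ0, hδη⟩ :=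
    (((eventually_all_finset A).2 hev).and (Ioc_mem_nhdsGT hη)).exists
  exact ⟨δ, hδ0, hδη, hδ⟩

lemma exists_maxDet_fiberThickening_le (hK : IsCompact K) (hη : 0 < η)
    (hli : ∀ d ≠ 0, LinearIndependent ℂ fun a (p : K) => biMonomial d a p)
    (hn : ∀ k, n k ≠ 0) (hP : ∀ k, (P k).natDegree ≤ n k) (hQ : ∀ k, (Q k).natDegree ≤ n k)
    {τ : ℝ} (hτ : 0 < τ)
    (ht : ∀ k, ∀ p ∈ K, ‖(Q k).eval p.1 * p.2 - (P k).eval p.1‖ ≤ Real.exp (t * n k))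
    (hs : ∀ p ∈ K, ∀ N : ℕ, ∃ k, N ≤ n k ∧
      Real.exp ((t + 4 * τ) * n k) < ‖(Q k).eval p.1‖) :
    ∃ η' > 0, ∃ M ≠ 0, ∀ᶠ d in atTop, M ∣ d →
      maxDet (biMonomial (2 * d)) (fiberThickening K η') ≤
        Real.exp (-(τ / 8) * d) ^ biDim (2 * d) *
          maxDet (biMonomial (2 * d)) (fiberThickening K η) := by
  obtain ⟨A, hA⟩ := exists_finset_exp_le_norm_on_fiberSphere hK hη ht hs
    (s' := t + 3 * τ) (by linarith) (by linarith)
  obtain ⟨η', hη', hle, hup⟩ := exists_forall_norm_le_on_fiberThickening hK hη hn ht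
    (t' := t + τ) (by linarith) A
  refine ⟨η', hη', ∏ k ∈ A, n k, Finset.prod_ne_zero_iff.2 fun k _ => hn k, ?_⟩
  filter_upwards [eventually_decay_factor_le A.card hτ, eventually_ne_atTop 0] with d hd hd0 hM
  have hdecay := maxDet_fiberThickening_le hK hη hle (hli d hd0)
    (hli (2 * d) (mul_ne_zero two_ne_zero hd0)) (fun k _ => hn k)
    (fun k hk => (Finset.dvd_prod_of_mem n hk).trans hM)
    (fun k _ => eval_mul_sub_eval_mem_biDegreeLE (hP k) (hQ k) (hn k)) hA hup
  rw [show t + τ - (t + 3 * τ) = -(2 * τ) by ring] at hdecay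
  exact hdecay.trans (mul_le_mul_of_nonneg_right hd (Real.iSup_nonneg fun _ => norm_nonneg _))

lemma exists_maxDet_fiberThickening_le_pow (hK : IsCompact K)
    (hli : ∀ d ≠ 0, LinearIndependent ℂ fun a (p : K) => biMonomial d a p)
    (hn : ∀ k, n k ≠ 0) (hP : ∀ k, (P k).natDegree ≤ n k) (hQ : ∀ k, (Q k).natDegree ≤ n k)
    {τ : ℝ} (hτ : 0 < τ)
    (ht : ∀ k, ∀ p ∈ K, ‖(Q k).eval p.1 * p.2 - (P k).eval p.1‖ ≤ Real.exp (t * n k))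
    (hs : ∀ p ∈ K, ∀ N : ℕ, ∃ k, N ≤ n k ∧
      Real.exp ((t + 4 * τ) * n k) < ‖(Q k).eval p.1‖) (J : ℕ) :
    ∃ η > 0, ∃ M ≠ 0, ∀ᶠ d in atTop, M ∣ d →
      maxDet (biMonomial (2 * d)) (fiberThickening K η) ≤
        Real.exp (-(J * (τ / 8)) * d) ^ biDim (2 * d) *
          maxDet (biMonomial (2 * d)) (fiberThickening K 1) := by
  induction J with
  | zero => exact ⟨1, one_pos, 1, one_ne_zero, by simp⟩
  | succ J ih =>
    obtain ⟨η, hη, M, hM, h⟩ := ih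
    obtain ⟨η', hη', M', hM', h'⟩ :=
      exists_maxDet_fiberThickening_le hK hη hli hn hP hQ hτ ht hs
    refine ⟨η', hη', M * M', mul_ne_zero hM hM', ?_⟩
    filter_upwards [h, h'] with d hd hd' hdvd
    refine (hd' (dvd_of_mul_left_dvd hdvd)).trans ?_
    calc _ ≤ Real.exp (-(τ / 8) * d) ^ biDim (2 * d) *
          (Real.exp (-(J * (τ / 8)) * d) ^ biDim (2 * d) *
            maxDet (biMonomial (2 * d)) (fiberThickening K 1)) := by
          gcongr
          exact hd (dvd_of_mul_right_dvd hdvd)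
      _ = _ := by
          rw [← mul_assoc, ← mul_pow, ← Real.exp_add]
          push_cast
          ring_nf

/-- If no normalized polynomial is small on `K`, then the coefficients of the interpolation basis at
Fekete points of a set containing `K` grow at most exponentially. -/
lemma maxDet_le_of_exists_exp_le {d : ℕ} {C R : ℝ} {L L' : Set (ℂ × ℂ)} (hK : K.Nonempty)
    (hC : ∀ P, IsNormalizedBiPoly d P → ∃ p ∈ K, Real.exp (-C * d) ≤ ‖P.evalEval p.1 p.2‖)
    (hL' : IsCompact L') (hKL' : K ⊆ L') (hR : 1 ≤ R) (hL : ∀ p ∈ L, ‖p‖ ≤ R) :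
    maxDet (biMonomial d) L ≤
      (biDim d).factorial * (biDim d * (Real.exp (C * d) * R ^ (2 * d))) ^ biDim d *
        maxDet (biMonomial d) L' := by
  obtain ⟨x, hx, hdet⟩ := exists_isFekete_det_ne_zero (continuous_biMonomial d) hL'
    (linearIndependent_biMonomial_mono hKL' (linearIndependent_biMonomial hK hC (Real.exp_pos _)))
  refine hx.maxDet_le_mul_maxDet hdet (fun y hy => ?_) (by positivity)
  have hentry : ∀ b j, ‖interpBasis (biMonomial d) x b (y j)‖ ≤
      biDim d * (Real.exp (C * d) * R ^ (2 * d)) := fun b j => by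
    refine (norm_sum_le _ _).trans ?_
    rw [← card_eq_biDim, ← nsmul_eq_mul, ← Finset.card_univ]
    refine Finset.sum_le_card_nsmul _ _ _ fun a _ => ?_
    rw [norm_mul]
    have hcoeff := mul_norm_coeff_le hK hC
      (fun p hp => hx.norm_interpBasis_le_one hdet b (hKL' hp)) (Real.exp_pos _).le a
    rw [neg_mul, Real.exp_neg, inv_mul_le_iff₀ (Real.exp_pos _), mul_one] at hcoeff
    exact mul_le_mul hcoeff (norm_biMonomial_le hR (hL _ (hy j)) a) (norm_nonneg _)
      (Real.exp_pos _).le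
  simpa [← card_eq_biDim] using norm_det_le_factorial_mul_prod
    (M := Matrix.of fun b j => interpBasis (biMonomial d) x b (y j)) hentry

lemma exists_maxDet_fiberThickening_one_le (hK : IsCompact K) (hne : K.Nonempty) {C : ℝ}
    (hC : ∀ d ≠ 0, ∀ P, IsNormalizedBiPoly d P →
      ∃ p ∈ K, Real.exp (-C * d) ≤ ‖P.evalEval p.1 p.2‖) :
    ∃ S : ℝ, ∀ᶠ d : ℕ in atTop, ∀ η > 0,
      maxDet (biMonomial (2 * d)) (fiberThickening K 1) ≤
        Real.exp (S * d) ^ biDim (2 * d) *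
          maxDet (biMonomial (2 * d)) (fiberThickening K η) := by
  obtain ⟨R, hR⟩ := (isCompact_fiberThickening hK 1).isBounded.exists_norm_le
  obtain ⟨ρ, hρ⟩ : ∃ ρ, max R 1 = Real.exp ρ := ⟨_, (Real.exp_log (by positivity)).symm⟩
  refine ⟨1 + (2 * C + 4 * ρ), ?_⟩
  filter_upwards [eventually_factorial_biDim_mul_le one_pos, eventually_ne_atTop 0]
    with d hfac hd η hη
  refine (maxDet_le_of_exists_exp_le hne (hC (2 * d) (mul_ne_zero two_ne_zero hd))
    (isCompact_fiberThickening hK η) (subset_fiberThickening hη.le) (le_max_right R 1)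
    fun p hp => (hR p hp).trans (le_max_left R 1)).trans ?_
  refine mul_le_mul_of_nonneg_right ?_ (Real.iSup_nonneg fun _ => norm_nonneg _)
  have hexp : Real.exp (C * (2 * d : ℕ)) * max R 1 ^ (2 * (2 * d)) =
      Real.exp ((2 * C + 4 * ρ) * d) := by
    rw [hρ, ← Real.exp_nat_mul, ← Real.exp_add]
    push_cast
    ring_nf
  rw [hexp, mul_pow, ← mul_assoc, add_mul 1, Real.exp_add, mul_pow]
  gcongr

lemma exists_exp_le_of_not_hasZeroBiChebyshev (hK : ¬ HasZeroBiChebyshev K) :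
    ∃ C : ℝ, ∀ d ≠ 0, ∀ P, IsNormalizedBiPoly d P →
      ∃ p ∈ K, Real.exp (-C * d) ≤ ‖P.evalEval p.1 p.2‖ := by
  simp only [HasZeroBiChebyshev, not_forall, not_exists, not_and, not_le] at hK
  obtain ⟨C, hC⟩ := hK
  refine ⟨C, fun d hd P hP => ?_⟩
  obtain ⟨p, hp, hlt⟩ := hC d P (Nat.one_le_iff_ne_zero.2 hd) hP
  exact ⟨p, hp, hlt.le⟩

lemma nonempty_of_not_hasZeroBiChebyshev (hK : ¬ HasZeroBiChebyshev K) : K.Nonempty := by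
  obtain ⟨C, hC⟩ := exists_exp_le_of_not_hasZeroBiChebyshev hK
  obtain ⟨P, hP, -⟩ := exists_isNormalizedBiPoly_of_coeff (d := 1) (c := fun _ => 1)
    (a := (0, 0)) (by simp) (by simp)
  obtain ⟨p, hp, -⟩ := hC 1 one_ne_zero P hP
  exact ⟨p, hp⟩

/-- On a set where no normalized polynomial is small, the determinants over a thickening cannot
decay at an arbitrary exponential rate. -/
lemma hasZeroBiChebyshev_of_norm_le_exp (hK : IsCompact K) (hn : ∀ k, n k ≠ 0)
    (hP : ∀ k, (P k).natDegree ≤ n k) (hQ : ∀ k, (Q k).natDegree ≤ n k) (hts : t < s)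
    (ht : ∀ k, ∀ p ∈ K, ‖(Q k).eval p.1 * p.2 - (P k).eval p.1‖ ≤ Real.exp (t * n k))
    (hs : ∀ p ∈ K, ∀ N : ℕ, ∃ k, N ≤ n k ∧ Real.exp (s * n k) < ‖(Q k).eval p.1‖) :
    HasZeroBiChebyshev K := by
  by_contra hZ
  obtain ⟨C, hC⟩ := exists_exp_le_of_not_hasZeroBiChebyshev hZ
  have hne : K.Nonempty := nonempty_of_not_hasZeroBiChebyshev hZ
  have hli : ∀ d ≠ 0, LinearIndependent ℂ fun a (p : K) => biMonomial d a p := fun d hd =>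
    linearIndependent_biMonomial hne (hC d hd) (Real.exp_pos _)
  obtain ⟨τ, hτ, rfl⟩ : ∃ τ > 0, s = t + 4 * τ := ⟨(s - t) / 4, by linarith, by ring⟩
  obtain ⟨S, hgrowth⟩ := exists_maxDet_fiberThickening_one_le hK hne hC
  obtain ⟨J, hJ⟩ := exists_nat_gt (S / (τ / 8))
  rw [div_lt_iff₀ (by positivity)] at hJ
  obtain ⟨η, hη, M, hM, hdecay⟩ :=
    exists_maxDet_fiberThickening_le_pow hK hli hn hP hQ hτ ht hs J
  obtain ⟨d, hdvd, ⟨hd, hd'⟩, hd0⟩ := ((Nat.frequently_modEq hM 0).and_eventually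
    ((hdecay.and hgrowth).and (eventually_gt_atTop 0))).exists
  have hpos : 0 < maxDet (biMonomial (2 * d)) (fiberThickening K η) :=
    maxDet_pos (continuous_biMonomial _) (isCompact_fiberThickening hK η)
      (linearIndependent_biMonomial_mono (subset_fiberThickening hη.le) (hli _ (by lia)))
  have hlt : Real.exp (-(J * (τ / 8)) * d) ^ biDim (2 * d) *
      Real.exp (S * d) ^ biDim (2 * d) < 1 := by
    rw [← mul_pow, ← Real.exp_add, ← add_mul]
    refine pow_lt_one₀ (Real.exp_pos _).le (Real.exp_lt_one_iff.2 ?_) (pow_ne_zero 2 (by lia))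
    exact mul_neg_of_neg_of_pos (by linarith) (by positivity)
  refine (hd ((Nat.modEq_zero_iff_dvd).1 hdvd)).not_gt ?_
  calc _ ≤ Real.exp (-(J * (τ / 8)) * d) ^ biDim (2 * d) * (Real.exp (S * d) ^ biDim (2 * d) *
        maxDet (biMonomial (2 * d)) (fiberThickening K η)) := by
        gcongr
        exact hd' η hη
    _ < maxDet (biMonomial (2 * d)) (fiberThickening K η) := by
        rw [← mul_assoc]
        exact mul_lt_of_lt_one_left hpos hlt

end RationalApproximants

/-! ### The negligible set -/

lemma inv_mul_elog_lt_coe {m : ℕ} (hm : m ≠ 0) {x : ℝ} (hx : 0 ≤ x) {t : ℝ} :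
    ((1 / (m : ℝ) : ℝ) : EReal) * elog x < (t : EReal) ↔ x < Real.exp (t * m) := by
  have hm' : (0 : ℝ) < m := by positivity
  unfold elog
  split_ifs with h
  · rw [EReal.coe_mul_bot_of_pos (by positivity)]
    simp [h, Real.exp_pos, EReal.bot_lt_coe]
  · rw [← EReal.coe_mul, EReal.coe_lt_coe_iff, ← Real.log_lt_iff_lt_exp (hx.lt_of_ne' h),
      one_div, inv_mul_lt_iff₀ hm', mul_comm]

/-- The function `u(z, w) = limsup (1 / n k) log |Q k (z) w - P k (z)|` attached to a sequence of
pairs of polynomials. -/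
def fractionPotential (n : ℕ → ℕ) (P Q : ℕ → Polynomial ℂ) (p : ℂ × ℂ) : EReal :=
  limsup (fun k => ((1 / (n k : ℝ) : ℝ) : EReal) *
    elog ‖(Q k).eval p.1 * p.2 - (P k).eval p.1‖) atTop

/-- The points near which, for arbitrarily large `k`, `max |P k| |Q k|` reaches
`exp (s * n k)`. It contains every point where the upper semicontinuous regularization of
`limsup (1 / n k) log (max |P k| |Q k|)` exceeds `s`. -/
def growthSet (n : ℕ → ℕ) (P Q : ℕ → Polynomial ℂ) (s : ℝ) : Set ℂ :=
  ⋂ N : ℕ, closure {z | ∃ k ≥ N, Real.exp (s * n k) ≤ max ‖(Q k).eval z‖ ‖(P k).eval z‖}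

/-- The points at which `max |P k| |Q k|` eventually grows at a strictly smaller exponential rate
than near them. The rates are rational so that the set is visibly a countable union. -/
def irregularSet (n : ℕ → ℕ) (P Q : ℕ → Polynomial ℂ) : Set ℂ :=
  {z | ∃ t s : ℚ, t < s ∧ (∀ᶠ k in atTop,
    max ‖(Q k).eval z‖ ‖(P k).eval z‖ ≤ Real.exp (t * n k)) ∧ z ∈ growthSet n P Q s}

section FractionPotential

variable {n : ℕ → ℕ} {P Q : ℕ → Polynomial ℂ} {p : ℂ × ℂ} {s t : ℝ}

lemma eventually_mul_exp_le (hn : Tendsto n atTop atTop) (hst : s < t) (c : ℝ) :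
    ∀ᶠ k in atTop, c * Real.exp (s * n k) ≤ Real.exp (t * n k) := by
  filter_upwards [((tendsto_exp_mul_natCast_atTop (sub_pos.2 hst)).comp hn).eventually_ge_atTop c]
    with k hk
  calc c * Real.exp (s * n k) ≤ Real.exp ((t - s) * n k) * Real.exp (s * n k) := by
        gcongr
        exact hk
    _ = Real.exp (t * n k) := by
        rw [← Real.exp_add]
        ring_nf

lemma eventually_norm_lt_exp_of_fractionPotential_lt (hn : Tendsto n atTop atTop)
    (h : fractionPotential n P Q p < t) :
    ∀ᶠ k in atTop, ‖(Q k).eval p.1 * p.2 - (P k).eval p.1‖ < Real.exp (t * n k) := by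
  filter_upwards [eventually_lt_of_limsup_lt h, hn.eventually_ne_atTop 0] with k hk hk0
  exact (inv_mul_elog_lt_coe hk0 (norm_nonneg _)).1 hk

lemma fractionPotential_le_of_eventually (hn : Tendsto n atTop atTop)
    (h : ∀ᶠ k in atTop, ‖(Q k).eval p.1 * p.2 - (P k).eval p.1‖ < Real.exp (t * n k)) :
    fractionPotential n P Q p ≤ t := by
  refine limsup_le_of_le (by isBoundedDefault) ?_
  filter_upwards [h, hn.eventually_ne_atTop 0] with k hk hk0
  exact ((inv_mul_elog_lt_coe hk0 (norm_nonneg _)).2 hk).le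

lemma frequently_exp_le_norm_of_lt_fractionPotential (hn : Tendsto n atTop atTop)
    (h : t < fractionPotential n P Q p) :
    ∃ᶠ k in atTop, Real.exp (t * n k) ≤ ‖(Q k).eval p.1 * p.2 - (P k).eval p.1‖ := by
  contrapose! h
  exact fractionPotential_le_of_eventually hn (by simpa using h)

lemma le_fractionPotential_of_frequently (hn : Tendsto n atTop atTop)
    (h : ∃ᶠ k in atTop, Real.exp (t * n k) ≤ ‖(Q k).eval p.1 * p.2 - (P k).eval p.1‖) :
    t ≤ fractionPotential n P Q p := by
  contrapose! h
  simpa using eventually_norm_lt_exp_of_fractionPotential_lt hn h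

lemma isClosed_growthSet : IsClosed (growthSet n P Q s) :=
  isClosed_iInter fun _ => isClosed_closure

lemma mem_growthSet_of_lt_limsup (hn : Tendsto n atTop atTop)
    (h : s < limsup (fractionPotential n P Q) (nhds p)) : p.1 ∈ growthSet n P Q s := by
  obtain ⟨s', hss', hs'⟩ := EReal.lt_iff_exists_real_btwn.1 h
  refine Set.mem_iInter.2 fun N => mem_closure_iff_frequently.2 <|
    (continuous_fst.tendsto p).frequently ?_
  have hnear : ∀ᶠ q : ℂ × ℂ in nhds p, ‖q.2‖ < ‖p.2‖ + 1 :=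
    (continuous_snd.norm.tendsto p).eventually_lt_const (lt_add_one _)
  refine ((frequently_lt_of_lt_limsup (by isBoundedDefault) hs').and_eventually hnear).mono ?_
  rintro q ⟨hq, hq2⟩
  obtain ⟨k, hk, hkN, hexp⟩ :=
    ((frequently_exp_le_norm_of_lt_fractionPotential hn hq).and_eventually
    ((eventually_ge_atTop N).and
      (eventually_mul_exp_le hn (EReal.coe_lt_coe_iff.1 hss') (‖p.2‖ + 2)))).exists
  refine ⟨k, hkN, ?_⟩
  set m := max ‖(Q k).eval q.1‖ ‖(P k).eval q.1‖
  refine le_of_mul_le_mul_left ?_ (by positivity : 0 < ‖p.2‖ + 2)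
  calc _ ≤ ‖(Q k).eval q.1 * q.2 - (P k).eval q.1‖ := hexp.trans hk
    _ ≤ ‖(Q k).eval q.1‖ * ‖q.2‖ + ‖(P k).eval q.1‖ := by
        rw [← norm_mul]
        exact norm_sub_le _ _
    _ ≤ m * (‖p.2‖ + 1) + m := by
        gcongr
        exacts [le_max_left _ _, le_max_right _ _]
    _ = (‖p.2‖ + 2) * m := by ring

lemma hasZeroChebyshev_inter_growthSet {N : ℕ} (hn : ∀ k ≥ N, n k ≠ 0)
    (hP : ∀ k, (P k).natDegree ≤ n k) (hQ : ∀ k, (Q k).natDegree ≤ n k) (hts : t < s) (R : ℝ) :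
    HasZeroChebyshev (closedBall 0 R ∩ {z | ∀ k ≥ N,
      max ‖(Q k).eval z‖ ‖(P k).eval z‖ ≤ Real.exp (t * n k)} ∩ growthSet n P Q s) := by
  have hclosed : IsClosed {z : ℂ | ∀ k ≥ N,
      max ‖(Q k).eval z‖ ‖(P k).eval z‖ ≤ Real.exp (t * n k)} := by
    simp only [Set.ofPred_forall]
    exact isClosed_iInter fun k => isClosed_iInter fun _ =>
      isClosed_le ((Q k).continuous.norm.max (P k).continuous.norm) continuous_const
  refine hasZeroChebyshev_of_oscillation (r := fun i : {k // N ≤ k} × Bool =>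
      if i.2 then Q i.1 else P i.1) (n := fun i => n i.1)
    (((isCompact_closedBall 0 R).inter_right hclosed).inter_right isClosed_growthSet)
    (fun i => hn _ i.1.2) ?_ hts ?_ ?_
  · rintro ⟨k, _ | _⟩
    exacts [hP k, hQ k]
  · rintro ⟨k, _ | _⟩ z ⟨⟨-, hz⟩, -⟩
    exacts [(le_max_right _ _).trans (hz k k.2), (le_max_left _ _).trans (hz k k.2)]
  · rintro z ⟨-, hz⟩ η hη
    obtain ⟨z', ⟨k, hk, hle⟩, hdist⟩ := mem_closure_iff.1 (Set.mem_iInter.1 hz N) η hη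
    refine ⟨z', by rwa [dist_comm], ?_⟩
    rcases le_max_iff.1 hle with h | h
    exacts [⟨(⟨k, hk⟩, true), h⟩, ⟨(⟨k, hk⟩, false), h⟩]

lemma thin_preimage_irregularSet (hn : Tendsto n atTop atTop)
    (hP : ∀ k, (P k).natDegree ≤ n k) (hQ : ∀ k, (Q k).natDegree ≤ n k) :
    Thin (Prod.fst ⁻¹' irregularSet n P Q) := by
  refine (thin_iUnion_of_hasZeroBiChebyshev
    (κ := {q : ℕ × ℚ × ℚ // (∀ k ≥ q.1, n k ≠ 0) ∧ q.2.1 < q.2.2}) fun q =>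
      (hasZeroChebyshev_inter_growthSet q.2.1 hP hQ (t := q.1.2.1) (s := q.1.2.2)
        (by exact_mod_cast q.2.2) q.1.1).hasZeroBiChebyshev).mono ?_
  rintro p ⟨t, s, hts, ht, hs⟩
  obtain ⟨N, hN⟩ := (ht.and ((hn.eventually_ne_atTop 0).and
    (tendsto_natCast_atTop_atTop.eventually_ge_atTop ‖p.1‖))).exists_forall_of_atTop
  exact Set.mem_iUnion.2 ⟨⟨(N, t, s), fun k hk => (hN k hk).2.1, hts⟩,
    ⟨mem_closedBall_zero_iff.2 (hN N le_rfl).2.2, fun k hk => (hN k hk).1⟩, hs⟩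

lemma frequently_exp_lt_norm_denominator (hn : Tendsto n atTop atTop) (hts : t < s)
    (ht : ∀ᶠ k in atTop, ‖(Q k).eval p.1 * p.2 - (P k).eval p.1‖ ≤ Real.exp (t * n k))
    (hs : ∃ᶠ k in atTop, Real.exp (s * n k) < max ‖(Q k).eval p.1‖ ‖(P k).eval p.1‖) :
    ∃ᶠ k in atTop, Real.exp (t * n k) < ‖(Q k).eval p.1‖ := by
  refine (hs.and_eventually (ht.and (eventually_mul_exp_le hn hts (‖p.2‖ + 1)))).mono ?_
  rintro k ⟨hk, htk, hexp⟩
  contrapose! hk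
  have hpos := Real.exp_pos (t * n k)
  refine le_trans (max_le ?_ ?_) hexp
  · exact hk.trans (le_mul_of_one_le_left hpos.le (by simp))
  · calc ‖(P k).eval p.1‖
        = ‖(Q k).eval p.1 * p.2 - ((Q k).eval p.1 * p.2 - (P k).eval p.1)‖ := by
          rw [sub_sub_cancel]
      _ ≤ ‖(Q k).eval p.1‖ * ‖p.2‖ + ‖(Q k).eval p.1 * p.2 - (P k).eval p.1‖ := by
          rw [← norm_mul]
          exact norm_sub_le _ _
      _ ≤ Real.exp (t * n k) * ‖p.2‖ + Real.exp (t * n k) := by gcongr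
      _ = (‖p.2‖ + 1) * Real.exp (t * n k) := by ring

lemma hasZeroBiChebyshev_of_frequently {N : ℕ} (hn : Tendsto n atTop atTop)
    (hnN : ∀ k ≥ N, n k ≠ 0) (hP : ∀ k, (P k).natDegree ≤ n k) (hQ : ∀ k, (Q k).natDegree ≤ n k)
    (hts : t < s) {K : Set (ℂ × ℂ)} (hK : IsCompact K)
    (ht : ∀ p ∈ K, ∀ k ≥ N, ‖(Q k).eval p.1 * p.2 - (P k).eval p.1‖ ≤ Real.exp (t * n k))
    (hs : ∀ p ∈ K, ∃ᶠ k in atTop, Real.exp (s * n k) < max ‖(Q k).eval p.1‖ ‖(P k).eval p.1‖) :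
    HasZeroBiChebyshev K := by
  obtain ⟨r, htr, hrs⟩ := exists_between hts
  refine hasZeroBiChebyshev_of_norm_le_exp (κ := {k // N ≤ k}) (n := fun k => n k) hK
    (fun k => hnN k k.2) (fun k => hP k) (fun k => hQ k) htr (fun k p hp => ht p hp k k.2) ?_
  intro p hp M
  have htp : ∀ᶠ k in atTop, ‖(Q k).eval p.1 * p.2 - (P k).eval p.1‖ ≤ Real.exp (r * n k) := by
    filter_upwards [eventually_ge_atTop N] with k hk
    exact (ht p hp k hk).trans (by gcongr)
  obtain ⟨k, hk, hkN, hkM⟩ := ((frequently_exp_lt_norm_denominator hn hrs htp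
    (hs p hp)).and_eventually ((eventually_ge_atTop N).and (hn.eventually_ge_atTop M))).exists
  exact ⟨⟨k, hkN⟩, hkM, hk⟩

lemma hasZeroBiChebyshev_inter_growthSet {N : ℕ} (hn : Tendsto n atTop atTop)
    (hnN : ∀ k ≥ N, n k ≠ 0) (hP : ∀ k, (P k).natDegree ≤ n k) (hQ : ∀ k, (Q k).natDegree ≤ n k)
    {ι : Type*} (T : TestFamily ι)
    (hT : ∀ p : ℂ × ℂ, p.1 ∈ irregularSet n P Q → T.infProd p = 0) {t s : ℚ} (hts : t < s)
    (R : ℝ) {c : ℝ} (hc : 0 < c) :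
    HasZeroBiChebyshev (closedBall 0 R ∩ {p | ∀ k ≥ N,
      ‖(Q k).eval p.1 * p.2 - (P k).eval p.1‖ ≤ Real.exp (t * n k)} ∩
      Prod.fst ⁻¹' growthSet n P Q s ∩ {p | c ≤ T.infProd p}) := by
  obtain ⟨r, htr, hrs⟩ := exists_between hts
  have hclosed : IsClosed {p : ℂ × ℂ | ∀ k ≥ N,
      ‖(Q k).eval p.1 * p.2 - (P k).eval p.1‖ ≤ Real.exp (t * n k)} := by
    simp only [Set.ofPred_forall]
    exact isClosed_iInter fun k => isClosed_iInter fun _ => isClosed_le (by fun_prop)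
      continuous_const
  refine hasZeroBiChebyshev_of_frequently hn hnN hP hQ (t := t) (s := r)
    (by exact_mod_cast htr) ((((isCompact_closedBall 0 R).inter_right hclosed).inter_right
      (isClosed_growthSet.preimage continuous_fst)).inter_right
      (T.upperSemicontinuous_infProd.isClosed_preimage c)) (fun p hp => hp.1.1.2) ?_
  rintro p ⟨⟨-, hgrowth⟩, hcp⟩
  by_contra hfreq
  simp only [not_frequently, not_lt] at hfreq
  exact (hc.trans_le hcp).ne' (hT p ⟨r, s, hrs, hfreq, hgrowth⟩)

/-- Over the complement of `irregularSet`, growth of `Q k * w - P k` near a point of `{u < u*}`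
forces growth of `Q k` at the point itself. -/
lemma thin_fractionPotential_lt_limsup (hn : Tendsto n atTop atTop)
    (hP : ∀ k, (P k).natDegree ≤ n k) (hQ : ∀ k, (Q k).natDegree ≤ n k) :
    Thin {p | fractionPotential n P Q p < limsup (fractionPotential n P Q) (nhds p)} := by
  obtain ⟨ι, hι, T, hT⟩ := thin_preimage_irregularSet hn hP hQ
  refine (Thin.union (S := {p | T.infProd p = 0}) ⟨ι, hι, T, fun _ hp => hp⟩
    (thin_iUnion_of_hasZeroBiChebyshev
      (κ := {q : ℕ × ℚ × ℚ // (∀ k ≥ q.1, n k ≠ 0) ∧ q.2.1 < q.2.2}) fun q =>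
        hasZeroBiChebyshev_inter_growthSet hn q.2.1 hP hQ T hT q.2.2 q.1.1
          (Nat.one_div_pos_of_nat (n := q.1.1)))).mono ?_
  intro p hp
  refine or_iff_not_imp_left.2 fun hzero => ?_
  obtain ⟨t, ht, htu⟩ := EReal.exists_rat_btwn_of_lt (Set.mem_ofPred_eq ▸ hp)
  obtain ⟨s, hts, hs⟩ := EReal.exists_rat_btwn_of_lt htu
  have hpos : 0 < T.infProd p := (T.infProd_nonneg p).lt_of_ne' hzero
  obtain ⟨N, hN⟩ := ((eventually_norm_lt_exp_of_fractionPotential_lt hn ht).and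
    ((hn.eventually_ne_atTop 0).and
    ((tendsto_natCast_atTop_atTop.eventually_ge_atTop ‖p‖).and
    (tendsto_one_div_add_atTop_nhds_zero_nat.eventually_le_const hpos)))).exists_forall_of_atTop
  exact Set.mem_iUnion.2 ⟨⟨(N, t, s), fun k hk => (hN k hk).2.1,
      by exact_mod_cast EReal.coe_lt_coe_iff.1 hts⟩,
    ⟨⟨mem_closedBall_zero_iff.2 (hN N le_rfl).2.2.1, fun k hk => (hN k hk).1.le⟩,
      mem_growthSet_of_lt_limsup hn hs⟩, (hN N le_rfl).2.2.2⟩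

/-! ### Points where the fractions converge geometrically -/

lemma eventually_norm_lt_exp_of_limsup_rpow_lt {q : ℕ → ℂ} (hn : Tendsto n atTop atTop)
    (hbdd : IsBoundedUnder (· ≤ ·) atTop fun k => ‖q k‖ ^ (1 / (n k : ℝ)))
    (h : limsup (fun k => ‖q k‖ ^ (1 / (n k : ℝ))) atTop < Real.exp t) :
    ∀ᶠ k in atTop, ‖q k‖ < Real.exp (t * n k) := by
  filter_upwards [eventually_lt_of_limsup_lt h hbdd, hn.eventually_ne_atTop 0] with k hk hk0
  rw [mul_comm, Real.exp_nat_mul, ← Real.rpow_inv_natCast_pow (norm_nonneg (q k)) hk0]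
  rw [one_div] at hk
  exact pow_lt_pow_left₀ hk (by positivity) hk0

lemma frequently_exp_lt_norm_of_lt_limsup_rpow {q : ℕ → ℂ} (hn : Tendsto n atTop atTop)
    (h : Real.exp t < limsup (fun k => ‖q k‖ ^ (1 / (n k : ℝ))) atTop) :
    ∃ᶠ k in atTop, Real.exp (t * n k) < ‖q k‖ := by
  have hcobdd : IsCoboundedUnder (· ≤ ·) atTop fun k => ‖q k‖ ^ (1 / (n k : ℝ)) :=
    isCoboundedUnder_le_of_le atTop (x := 0) fun k => by positivity
  refine ((frequently_lt_of_lt_limsup hcobdd h).and_eventually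
    (hn.eventually_ne_atTop 0)).mono ?_
  rintro k ⟨hk, hk0⟩
  rw [mul_comm, Real.exp_nat_mul, ← Real.rpow_inv_natCast_pow (norm_nonneg (q k)) hk0]
  rw [one_div] at hk
  exact pow_lt_pow_left₀ hk (Real.exp_pos t).le hk0

lemma fractionPotential_le_of_norm_sub_div_le {z w : ℂ} {α : ℝ} (hα : 0 < α)
    (hn : Tendsto n atTop atTop) (hQ0 : ∀ k, (Q k).eval z ≠ 0)
    (happrox : ∀ k, ‖w - (P k).eval z / (Q k).eval z‖ ≤ α ^ n k)
    (hQ : ∀ᶠ k in atTop, ‖(Q k).eval z‖ < Real.exp (t * n k)) :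
    fractionPotential n P Q (z, w) ≤ ((t + Real.log α : ℝ) : EReal) := by
  refine fractionPotential_le_of_eventually hn ?_
  filter_upwards [hQ] with k hk
  calc ‖(Q k).eval z * w - (P k).eval z‖
      = ‖(Q k).eval z‖ * ‖w - (P k).eval z / (Q k).eval z‖ := by
        rw [← norm_mul, mul_sub, mul_div_cancel₀ _ (hQ0 k)]
    _ ≤ ‖(Q k).eval z‖ * α ^ n k := by
        gcongr
        exact happrox k
    _ < Real.exp (t * n k) * α ^ n k := by gcongr
    _ = Real.exp ((t + Real.log α) * n k) := by
        rw [add_mul, Real.exp_add, mul_comm (Real.log α), Real.exp_nat_mul, Real.exp_log hα]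

lemma le_fractionPotential_of_tendsto {z y w : ℂ} (hn : Tendsto n atTop atTop)
    (hQ0 : ∀ k, (Q k).eval z ≠ 0)
    (hlim : Tendsto (fun k => (P k).eval z / (Q k).eval z) atTop (nhds y)) (hw : w ≠ y)
    (ht : Real.exp t < limsup (fun k => ‖(Q k).eval z‖ ^ (1 / (n k : ℝ))) atTop) :
    t ≤ fractionPotential n P Q (z, w) := by
  obtain ⟨t', htt', ht'⟩ : ∃ t' > t,
      Real.exp t' < limsup (fun k => ‖(Q k).eval z‖ ^ (1 / (n k : ℝ))) atTop :=
    (((Real.continuous_exp.tendsto t).eventually_lt_const ht).filter_mono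
      (nhdsWithin_le_nhds (s := Set.Ioi t))).and self_mem_nhdsWithin |>.exists.imp fun _ h => h.symm
  have hpos : 0 < ‖w - y‖ := norm_pos_iff.2 (sub_ne_zero.2 hw)
  have hfar : ∀ᶠ k in atTop, ‖w - y‖ / 2 < ‖w - (P k).eval z / (Q k).eval z‖ :=
    (hlim.const_sub w).norm.eventually_const_lt (half_lt_self hpos)
  refine le_fractionPotential_of_frequently hn <|
    ((frequently_exp_lt_norm_of_lt_limsup_rpow hn ht').and_eventually
      (hfar.and (eventually_mul_exp_le hn htt' (‖w - y‖ / 2)⁻¹))).mono ?_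
  rintro k ⟨hk, hfark, hexp⟩
  rw [inv_mul_le_iff₀ (half_pos hpos)] at hexp
  calc Real.exp (t * n k) ≤ ‖w - y‖ / 2 * Real.exp (t' * n k) := hexp
    _ ≤ ‖w - (P k).eval z / (Q k).eval z‖ * ‖(Q k).eval z‖ := by gcongr
    _ = ‖(Q k).eval z * w - (P k).eval z‖ := by
        rw [← norm_mul, sub_mul, div_mul_cancel₀ _ (hQ0 k), mul_comm w]

lemma fractionPotential_lt_limsup_of_norm_sub_div_le {z w : ℂ} {α : ℝ}
    (hα : α ∈ Set.Ioo (0 : ℝ) 1) (hn : Tendsto n atTop atTop) (hQ0 : ∀ k, (Q k).eval z ≠ 0)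
    (happrox : ∀ k, ‖w - (P k).eval z / (Q k).eval z‖ ≤ α ^ n k)
    (hbdd : IsBoundedUnder (· ≤ ·) atTop fun k => ‖(Q k).eval z‖ ^ (1 / (n k : ℝ)))
    (hne : limsup (fun k => ‖(Q k).eval z‖ ^ (1 / (n k : ℝ))) atTop ≠ 0) :
    fractionPotential n P Q (z, w) < limsup (fractionPotential n P Q) (nhds (z, w)) := by
  have hnonneg : 0 ≤ limsup (fun k => ‖(Q k).eval z‖ ^ (1 / (n k : ℝ))) atTop :=
    le_limsup_of_frequently_le (Frequently.of_forall fun k => by positivity) hbdd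
  obtain ⟨ρ, hρ⟩ : ∃ ρ, limsup (fun k => ‖(Q k).eval z‖ ^ (1 / (n k : ℝ))) atTop = Real.exp ρ :=
    ⟨_, (Real.exp_log (hnonneg.lt_of_ne' hne)).symm⟩
  obtain ⟨ε, hε, hlog⟩ : ∃ ε > 0, Real.log α = -(3 * ε) :=
    ⟨-Real.log α / 3, by linarith [Real.log_neg hα.1 hα.2], by ring⟩
  have hupper : fractionPotential n P Q (z, w) ≤ ((ρ + ε + Real.log α : ℝ) : EReal) :=
    fractionPotential_le_of_norm_sub_div_le hα.1 hn hQ0 happrox <|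
      eventually_norm_lt_exp_of_limsup_rpow_lt hn hbdd
        (hρ.trans_lt (Real.exp_lt_exp.2 (lt_add_of_pos_right ρ hε)))
  have hlim : Tendsto (fun k => (P k).eval z / (Q k).eval z) atTop (nhds w) := by
    refine tendsto_iff_norm_sub_tendsto_zero.2 (squeeze_zero (fun _ => norm_nonneg _)
      (fun k => ?_) ((tendsto_pow_atTop_nhds_zero_of_lt_one hα.1.le hα.2).comp hn))
    rw [norm_sub_rev]
    exact happrox k
  have hlower : ∀ᶠ w' in nhdsWithin w {w}ᶜ,
      ((ρ - ε : ℝ) : EReal) ≤ fractionPotential n P Q (z, w') :=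
    eventually_nhdsWithin_of_forall fun w' hw' => le_fractionPotential_of_tendsto hn hQ0 hlim hw'
      ((Real.exp_lt_exp.2 (sub_lt_self ρ hε)).trans_eq hρ.symm)
  have hnhds : Tendsto (fun w' => (z, w')) (nhdsWithin w {w}ᶜ) (nhds (z, w)) :=
    ((Continuous.prodMk_right z).tendsto w).mono_left nhdsWithin_le_nhds
  calc fractionPotential n P Q (z, w) ≤ ((ρ + ε + Real.log α : ℝ) : EReal) := hupper
    _ < ((ρ - ε : ℝ) : EReal) := EReal.coe_lt_coe_iff.2 (by linarith)
    _ ≤ limsup (fractionPotential n P Q) (nhds (z, w)) :=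
        le_limsup_of_frequently_le (hnhds.frequently hlower.frequently) (by isBoundedDefault)

end FractionPotential

theorem negligible_set_pluripolar_general {Δ : Set ℂ} {f : ℂ → ℂ} {α : ℝ}
    (hα : α ∈ Set.Ioo (0 : ℝ) 1) {n : ℕ → ℕ} (hn : Tendsto n atTop atTop)
    {P Q : ℕ → Polynomial ℂ} (hP : ∀ k, (P k).natDegree ≤ n k)
    (hQ : ∀ k, (Q k).natDegree ≤ n k) (hQ0 : ∀ k, ∀ z ∈ Δ, (Q k).eval z ≠ 0)
    (hbdd : ∀ z ∈ Δ, IsBoundedUnder (· ≤ ·) atTop fun k => ‖(Q k).eval z‖ ^ (1 / (n k : ℝ)))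
    (happrox : ∀ k, ∀ z ∈ Δ, ‖f z - (P k).eval z / (Q k).eval z‖ ≤ α ^ n k)
    {u ustar : ℂ × ℂ → EReal} (hu : u = fractionPotential n P Q)
    (hustar : ustar = fun p => limsup u (nhds p)) :
    (∀ z ∈ Δ, limsup (fun k => ‖(Q k).eval z‖ ^ (1 / (n k : ℝ))) atTop ≠ 0 →
      u (z, f z) < ustar (z, f z)) ∧
    Pluripolar {p | u p < ustar p} := by
  subst hu hustar
  exact ⟨fun z hz => fractionPotential_lt_limsup_of_norm_sub_div_le hα hn (fun k => hQ0 k z hz)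
    (fun k => happrox k z hz) (hbdd z hz), (thin_fractionPotential_lt_limsup hn hP hQ).pluripolar⟩

/-- With `u(z,w) = limsup_k (1/n_k)·log|q_{n_k}(z)·w − p_{n_k}(z)|` and `u*` its upper
semicontinuous regularization, every `x ∈ Δ` with `limsup_k |q_{n_k}(x)|^{1/n_k} ≠ 0`
satisfies `u(x,f(x)) < u*(x,f(x))`, i.e. `(x,f(x))` lies in the negligible set
`E = {u < u*}`, which is pluripolar in `ℂ²`. -/
theorem negligible_set_pluripolar (a b : ℝ) (hab : a < b) (f : ℝ → ℝ)
    (hf : ContinuousOn f (Set.Icc a b)) (α : ℝ) (hα : α ∈ Set.Ioo (0 : ℝ) 1)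
    (n : ℕ → ℕ) (hmono : StrictMono n) (P Q : ℕ → Polynomial ℂ)
    (hP : ∀ k, (P k).natDegree ≤ n k) (hQ : ∀ k, (Q k).natDegree ≤ n k)
    (hQ0 : ∀ k, ∀ x ∈ Set.Icc a b, (Q k).eval (x : ℂ) ≠ 0)
    (hPnorm : ∀ k, ∀ x ∈ Set.Icc a b, ‖(P k).eval (x : ℂ)‖ ≤ 1)
    (hQnorm : ∀ k, IsGreatest
      ((fun x : ℝ => ‖(Q k).eval (x : ℂ)‖) '' Set.Icc a b) 1)
    (happrox : ∀ k, ∀ x ∈ Set.Icc a b,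
      ‖(f x : ℂ) - (P k).eval (x : ℂ) / (Q k).eval (x : ℂ)‖ ≤ α ^ n k)
    (u ustar : ℂ × ℂ → EReal)
    (hu : u = fun p : ℂ × ℂ => Filter.limsup (fun k => ((1 / (n k : ℝ) : ℝ) : EReal) *
      elog (‖(Q k).eval p.1 * p.2 - (P k).eval p.1‖)) Filter.atTop)
    (hustar : ustar = fun p : ℂ × ℂ => Filter.limsup u (nhds p)) :
    (∀ x ∈ Set.Icc a b,
      Filter.limsup (fun k => ‖(Q k).eval (x : ℂ)‖ ^ (1 / (n k : ℝ)))
        Filter.atTop ≠ 0 →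
      u ((x : ℂ), (f x : ℂ)) < ustar ((x : ℂ), (f x : ℂ)) ∧
      ((x : ℂ), (f x : ℂ)) ∈ {p : ℂ × ℂ | u p < ustar p}) ∧
    Pluripolar {p : ℂ × ℂ | u p < ustar p} := by
  have hbdd : ∀ z ∈ (fun x : ℝ => (x : ℂ)) '' Set.Icc a b,
      IsBoundedUnder (· ≤ ·) atTop fun k => ‖(Q k).eval z‖ ^ (1 / (n k : ℝ)) := by
    rintro _ ⟨x, hx, rfl⟩
    exact isBoundedUnder_of ⟨1, fun k =>
      Real.rpow_le_one (norm_nonneg _) ((hQnorm k).2 ⟨x, hx, rfl⟩) (by positivity)⟩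
  obtain ⟨hlt, hpluripolar⟩ := negligible_set_pluripolar_general (f := fun z => f z.re) hα
    hmono.tendsto_atTop hP hQ (fun k => Set.forall_mem_image.2 (hQ0 k)) hbdd
    (fun k => Set.forall_mem_image.2 (happrox k)) hu hustar
  exact ⟨fun x hx hne => ⟨hlt x ⟨x, hx, rfl⟩ hne, hlt x ⟨x, hx, rfl⟩ hne⟩, hpluripolar⟩
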